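/- Let G=(V,E,I,T) be an inner Eulerian grapht with |E|≤ℵ₀ that satisfies the linkability condition. Then for every edge e incident with some terminal vertex (i.e., e∈∪_{t∈T}δ_G(t)) there exists a T-path P through e such that the grapht G−E(P) is inner Eulerian and satisfies the linkability condition. -/

import Mathlib

/-! Common definitions: graphts (multigraphs with terminals), walks, paths, cycles,
edge cuts, inner Eulerian graphts, path systems, linkages, Erdős–Menger cuts,
restriction (edge deletion) and contraction. -/

universe u v

/-- A *grapht*: a multigraph (no loops, parallel edges allowed) given by an incidence
function `I : E → Sym2 V`, together with a set `T` of at least two terminal vertices. -/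
structure Grapht (V : Type u) (E : Type v) where
  I : E → Sym2 V
  loopless : ∀ e : E, ¬ (I e).IsDiag
  T : Set V
  T_nontrivial : T.Nontrivial

namespace Grapht

variable {V : Type u} {E : Type v}

/-- `G.IsWalk vs es` holds when `vs` is the vertex sequence and `es` the edge sequence
of a walk in `G`. -/
inductive IsWalk (G : Grapht V E) : List V → List E → Prop
  | nil (v : V) : IsWalk G [v] []
  | cons {u w : V} {vs : List V} {e : E} {es : List E} :
      G.I e = s(u, w) → IsWalk G (w :: vs) es → IsWalk G (u :: w :: vs) (e :: es)

/-- A finite path in the grapht `G` (no repeated vertices), with endpoints `first`, `last`. -/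
structure Path (G : Grapht V E) where
  first : V
  last : V
  verts : List V
  edges : List E
  isWalk : G.IsWalk verts edges
  nodup : verts.Nodup
  head_eq : verts.head? = some first
  getLast_eq : verts.getLast? = some last

/-- A finite cycle in the grapht `G`. -/
structure Cycle (G : Grapht V E) where
  verts : List V
  edges : List E
  isWalk : G.IsWalk verts edges
  closed : verts.head? = verts.getLast?
  nontrivial : edges ≠ []
  edges_nodup : edges.Nodup
  tail_nodup : verts.tail.Nodup

variable {G : Grapht V E}

/-- The internal (inner) vertices of a path. -/
def Path.inner (P : G.Path) : List V := (P.verts.drop 1).dropLast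

/-- The edge set of a path. -/
def Path.edgeSet (P : G.Path) : Set E := {e | e ∈ P.edges}

/-- The edge set of a cycle. -/
def Cycle.edgeSet (C : G.Cycle) : Set E := {e | e ∈ C.edges}

variable (G)

/-- `δ_G(X)`: the set of edges with exactly one endpoint in `X`. -/
def edgeCut (X : Set V) : Set E :=
  {e | ∃ u w, G.I e = s(u, w) ∧ u ∈ X ∧ w ∉ X}

/-- A grapht is *inner Eulerian* if there is no `X ⊆ V ∖ T` whose cut `δ(X)` is a
finite set of odd size. -/
def InnerEulerian : Prop :=
  ∀ X : Set V, Disjoint X G.T → ¬ ((G.edgeCut X).Finite ∧ Odd (G.edgeCut X).ncard)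

/-- An `AB`-path: a path with first vertex in `A`, last vertex in `B` and no internal
vertex in `A ∪ B`. -/
def IsABPath (A B : Set V) (P : G.Path) : Prop :=
  P.first ∈ A ∧ P.last ∈ B ∧ ∀ v ∈ P.inner, v ∉ A ∪ B

/-- A `T`-path: a path between two distinct terminal vertices without internal
terminal vertices. -/
def IsTPath (P : G.Path) : Prop :=
  P.first ∈ G.T ∧ P.last ∈ G.T ∧ P.first ≠ P.last ∧ ∀ v ∈ P.inner, v ∉ G.T

/-- A system of pairwise edge-disjoint paths. -/
def EdgeDisjoint (Ps : Set G.Path) : Prop :=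
  Ps.Pairwise fun P Q => ∀ e, e ∈ P.edges → e ∉ Q.edges

/-- A system of pairwise edge-disjoint `T`-paths. -/
def IsTPathSystem (Ps : Set G.Path) : Prop :=
  G.EdgeDisjoint Ps ∧ ∀ P ∈ Ps, G.IsTPath P

/-- The set of edges used by a path system. -/
def sysEdges (Ps : Set G.Path) : Set E := ⋃ P ∈ Ps, P.edgeSet

/-- `C` is *orthogonal* to the path system `Ps`: `C` consists of exactly one edge from
each path of `Ps`. -/
def Orthogonal (C : Set E) (Ps : Set G.Path) : Prop :=
  (∀ P ∈ Ps, ∃! e, e ∈ C ∧ e ∈ P.edges) ∧ ∀ e ∈ C, ∃ P ∈ Ps, e ∈ P.edges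

/-- `C` separates `A` and `B`: every `AB`-path meets `C` (i.e. `G − C` has no `AB`-path). -/
def Separates (C : Set E) (A B : Set V) : Prop :=
  ∀ P : G.Path, G.IsABPath A B P → ∃ e ∈ C, e ∈ P.edges

/-- An `AB`-cut. -/
def IsABCut (A B : Set V) (C : Set E) : Prop :=
  ∀ P : G.Path, G.IsABPath A B P → ∃ e ∈ C, e ∈ P.edges

/-- An Erdős–Menger `AB`-cut: an `AB`-cut orthogonal to some system of pairwise
edge-disjoint `AB`-paths. -/
def IsEMABCut (A B : Set V) (C : Set E) : Prop :=
  G.IsABCut A B C ∧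
    ∃ Ps : Set G.Path, G.EdgeDisjoint Ps ∧ (∀ P ∈ Ps, G.IsABPath A B P) ∧ G.Orthogonal C Ps

/-- The order `⊴` on (Erdős–Menger) `AB`-cuts: on every `AB`-path the first edge of `C`
comes no later than the first edge of `C'`. -/
def ABCutLE (A B : Set V) (C C' : Set E) : Prop :=
  ∀ P : G.Path, G.IsABPath A B P →
    ∀ i : Fin P.edges.length, P.edges.get i ∈ C' →
      ∃ j : Fin P.edges.length, (j : ℕ) ≤ (i : ℕ) ∧ P.edges.get j ∈ C

/-- `C` is the `⊴`-largest Erdős–Menger `AB`-cut. -/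
def IsLargestEMABCut (A B : Set V) (C : Set E) : Prop :=
  G.IsEMABCut A B C ∧ ∀ C', G.IsEMABCut A B C' → G.ABCutLE A B C' C

/-- A system `Ps` of pairwise edge-disjoint `T`-paths *links* the terminal `t`:
it covers `δ(t)`. -/
def Links (Ps : Set G.Path) (t : V) : Prop :=
  G.IsTPathSystem Ps ∧ ∀ e ∈ G.edgeCut {t}, ∃ P ∈ Ps, e ∈ P.edges

/-- The terminal `t` is linked. -/
def Linked (t : V) : Prop := ∃ Ps : Set G.Path, G.Links Ps t

/-- The linkability condition: every terminal is linked. -/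
def LinkabilityCondition : Prop := ∀ t ∈ G.T, G.Linked t

/-- A perfect linkage: a system of pairwise edge-disjoint `T`-paths linking every
terminal. -/
def IsPerfectLinkage (Ps : Set G.Path) : Prop :=
  G.IsTPathSystem Ps ∧ ∀ t ∈ G.T, ∀ e ∈ G.edgeCut {t}, ∃ P ∈ Ps, e ∈ P.edges

/-- In the two-terminal setting: a system of pairwise edge-disjoint `st`-paths
covering `δ(s)` (a linkage of `s`). -/
def IsStLinkage (s t : V) (Ps : Set G.Path) : Prop :=
  G.EdgeDisjoint Ps ∧ (∀ P ∈ Ps, G.IsABPath {s} {t} P) ∧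
    ∀ e ∈ G.edgeCut {s}, ∃ P ∈ Ps, e ∈ P.edges

/-- `s` is linked (two-terminal setting). -/
def StLinked (s t : V) : Prop := ∃ Ps : Set G.Path, G.IsStLinkage s t Ps

/-- `λ_G(A,B)`: the maximal number of pairwise edge-disjoint `AB`-paths. -/
noncomputable def lambda (A B : Set V) : ℕ :=
  sSup {n : ℕ | ∃ Ps : Set G.Path, G.EdgeDisjoint Ps ∧ (∀ P ∈ Ps, G.IsABPath A B P) ∧
    Ps.Finite ∧ Ps.ncard = n}

/-- The grapht obtained by deleting all edges outside `F`. -/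
def restrict (F : Set E) : Grapht V F where
  I e := G.I e.1
  loopless e := G.loopless e.1
  T := G.T
  T_nontrivial := G.T_nontrivial

/-- The map sending every vertex of a contracted set `X t` (`t ∈ T`) to `t`. -/
noncomputable def contractMap (X : V → Set V) : V → V := fun v =>
  letI := Classical.dec (∃ u ∈ G.T, v ∈ X u)
  if h : ∃ u ∈ G.T, v ∈ X u then h.choose else v

/-- The contraction `G/ℱ` of the family `ℱ = {X t : t ∈ T}`: each `X t` is contracted
to `t` and the arising loops are deleted. -/
noncomputable def contract (X : V → Set V) :
    Grapht V {e : E // ¬ ((G.I e).map (G.contractMap X)).IsDiag} where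
  I e := (G.I e.1).map (G.contractMap X)
  loopless e := e.2
  T := G.T
  T_nontrivial := G.T_nontrivial

end Grapht


namespace Grapht

section Aux

variable {V : Type u} {E : Type v}

/-- Walks as lists of darts `(start, edge, target)`. -/
def Wk (G : Grapht V E) : V → List (V × E × V) → V → Prop
  | a, [], b => a = b
  | a, d :: l, b => d.1 = a ∧ G.I d.2.1 = s(d.1, d.2.2) ∧ Wk G d.2.2 l b

/-- start vertices -/
def vs (l : List (V × E × V)) : List V := l.map (fun d => d.1)
/-- target vertices -/
def ts (l : List (V × E × V)) : List V := l.map (fun d => d.2.2)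
/-- edges -/
def es (l : List (V × E × V)) : List E := l.map (fun d => d.2.1)

@[simp] theorem vs_nil : vs ([] : List (V × E × V)) = [] := rfl
@[simp] theorem ts_nil : ts ([] : List (V × E × V)) = [] := rfl
@[simp] theorem es_nil : es ([] : List (V × E × V)) = [] := rfl
@[simp] theorem vs_cons (d : V × E × V) (l) : vs (d :: l) = d.1 :: vs l := rfl
@[simp] theorem ts_cons (d : V × E × V) (l) : ts (d :: l) = d.2.2 :: ts l := rfl
@[simp] theorem es_cons (d : V × E × V) (l) : es (d :: l) = d.2.1 :: es l := rfl
@[simp] theorem vs_append (l m : List (V × E × V)) : vs (l ++ m) = vs l ++ vs m := by simp [vs]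
@[simp] theorem ts_append (l m : List (V × E × V)) : ts (l ++ m) = ts l ++ ts m := by simp [ts]
@[simp] theorem es_append (l m : List (V × E × V)) : es (l ++ m) = es l ++ es m := by simp [es]

theorem mem_es {l : List (V × E × V)} {g : E} : g ∈ es l ↔ ∃ x y, (x, g, y) ∈ l := by
  simp [es]

variable (G : Grapht V E)

@[simp] theorem wk_nil {a b : V} : Wk G a [] b ↔ a = b := Iff.rfl
@[simp] theorem wk_cons {a b : V} {d : V × E × V} {l} :
    Wk G a (d :: l) b ↔ d.1 = a ∧ G.I d.2.1 = s(d.1, d.2.2) ∧ Wk G d.2.2 l b := Iff.rfl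

variable {G}

theorem wk_append {l m : List (V × E × V)} : ∀ {a b : V},
    Wk G a (l ++ m) b ↔ ∃ c, Wk G a l c ∧ Wk G c m b := by
  induction l with
  | nil => intro a b; simp
  | cons d l ih =>
    intro a b
    simp only [List.cons_append, wk_cons, ih]
    constructor
    · rintro ⟨h1, h2, c, h3, h4⟩; exact ⟨c, ⟨h1, h2, h3⟩, h4⟩
    · rintro ⟨c, ⟨h1, h2, h3⟩, h4⟩; exact ⟨h1, h2, c, h3, h4⟩

theorem wk_verts {l : List (V × E × V)} : ∀ {a b : V}, Wk G a l b → vs l ++ [b] = a :: ts l := by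
  induction l with
  | nil => intro a b h; simp at h; simp [h]
  | cons d l ih =>
    intro a b h
    obtain ⟨h1, h2, h3⟩ := h
    simp [ih h3, h1]

theorem wk_inc {l : List (V × E × V)} : ∀ {a b : V}, Wk G a l b → ∀ d ∈ l, G.I d.2.1 = s(d.1, d.2.2) := by
  induction l with
  | nil => simp
  | cons d l ih =>
    intro a b h x hx
    obtain ⟨h1, h2, h3⟩ := h
    rcases List.mem_cons.1 hx with rfl | hx
    · exact h2
    · exact ih h3 x hx

theorem rtg_mono {r p : V → V → Prop} (h : ∀ x y, r x y → p x y) {a b : V}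
    (hab : Relation.ReflTransGen r a b) : Relation.ReflTransGen p a b := by
  induction hab with
  | refl => exact Relation.ReflTransGen.refl
  | tail _ h' ih => exact ih.tail (h _ _ h')

/-- connected through edges of `C` -/
def Con (G : Grapht V E) (C : Set E) : V → V → Prop :=
  Relation.ReflTransGen (fun x y => ∃ g ∈ C, G.I g = s(x, y))

theorem Con.refl (C : Set E) (x : V) : Con G C x x := Relation.ReflTransGen.refl

theorem Con.trans {C : Set E} {x y z : V} (h : Con G C x y) (h' : Con G C y z) : Con G C x z :=
  Relation.ReflTransGen.trans h h'

theorem Con.mono {C C' : Set E} (hC : C ⊆ C') {x y : V} (h : Con G C x y) : Con G C' x y :=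
  rtg_mono (fun _ _ ⟨g, hg, h⟩ => ⟨g, hC hg, h⟩) h

theorem Con.single {C : Set E} {x y : V} {g : E} (hg : g ∈ C) (h : G.I g = s(x, y)) : Con G C x y :=
  Relation.ReflTransGen.single ⟨g, hg, h⟩

theorem Con.symm {C : Set E} {x y : V} (h : Con G C x y) : Con G C y x := by
  induction h with
  | refl => exact Con.refl _ _
  | tail _ h ih =>
    obtain ⟨g, hg, h⟩ := h
    exact (Con.single hg (h.trans Sym2.eq_swap)).trans ih

theorem Wk.con {l : List (V × E × V)} : ∀ {a b : V}, Wk G a l b → ∀ {C : Set E}, (∀ g ∈ es l, g ∈ C) →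
    Con G C a b := by
  induction l with
  | nil => intro a b h C _; simp at h; rw [h]; exact Con.refl _ _
  | cons d l ih =>
    intro a b h C hC
    obtain ⟨h1, h2, h3⟩ := h
    refine (Con.single (g := d.2.1) (hC _ (by simp)) ?_).trans (ih h3 (fun g hg => hC g (by simp [hg])))
    rw [← h1]; exact h2

/-- Path extraction for a dart relation. -/
theorem exists_path {R : V → E → V → Prop} {a b : V}
    (h : Relation.ReflTransGen (fun x y => ∃ g, G.I g = s(x, y) ∧ R x g y) a b) :
    ∃ l, Wk G a l b ∧ (vs l ++ [b]).Nodup ∧ ∀ d ∈ l, R d.1 d.2.1 d.2.2 := by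
  induction h using Relation.ReflTransGen.head_induction_on with
  | refl => exact ⟨[], by simp⟩
  | head h _ ih =>
    rename_i x y _
    obtain ⟨g, hg, hR⟩ := h
    obtain ⟨l, h1, h2, h3⟩ := ih
    by_cases hx : x ∈ vs l ++ [b]
    · rcases List.mem_append.1 hx with hx | hx
      · obtain ⟨d, hd, rfl⟩ := List.mem_map.1 hx
        obtain ⟨l1, l2, rfl⟩ := List.append_of_mem hd
        obtain ⟨c, h4, h5⟩ := wk_append.1 h1
        have : d.1 = c := h5.1
        refine ⟨d :: l2, ?_, ?_, fun d' hd' => h3 d' (by simp at hd' ⊢; tauto)⟩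
        · rw [this]; exact h5
        · rw [vs_append, List.append_assoc] at h2
          exact (List.nodup_append.1 h2).2.1
      · simp at hx; subst hx
        exact ⟨[], by simp⟩
    · refine ⟨(x, g, y) :: l, ⟨rfl, hg, h1⟩, ?_, ?_⟩
      · simp only [vs_cons, List.cons_append, List.nodup_cons]; exact ⟨hx, h2⟩
      · intro d hd
        rcases List.mem_cons.1 hd with rfl | hd
        · exact hR
        · exact h3 d hd

theorem Con.path {C : Set E} {a b : V} (h : Con G C a b) :
    ∃ l, Wk G a l b ∧ (vs l ++ [b]).Nodup ∧ ∀ g ∈ es l, g ∈ C := by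
  obtain ⟨l, h1, h2, h3⟩ := exists_path (G := G) (R := fun _ g _ => g ∈ C) (a := a) (b := b)
    (rtg_mono (fun x y ⟨g, hg, h⟩ => ⟨g, h, hg⟩) h)
  refine ⟨l, h1, h2, fun g hg => ?_⟩
  obtain ⟨x, y, hd⟩ := mem_es.1 hg
  exact h3 _ hd

theorem mem_cut {g : E} {x y : V} (h : G.I g = s(x, y)) (X : Set V) :
    g ∈ G.edgeCut X ↔ (x ∈ X ∧ y ∉ X) ∨ (y ∈ X ∧ x ∉ X) := by
  constructor
  · rintro ⟨a, b, hab, ha, hb⟩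
    rw [h, Sym2.eq_iff] at hab
    rcases hab with ⟨rfl, rfl⟩ | ⟨rfl, rfl⟩ <;> tauto
  · rintro (⟨h1, h2⟩ | ⟨h1, h2⟩)
    · exact ⟨x, y, h, h1, h2⟩
    · exact ⟨y, x, h.trans Sym2.eq_swap, h1, h2⟩

theorem I_ne {g : E} {x y : V} (h : G.I g = s(x, y)) : x ≠ y := by
  have := G.loopless g
  rw [h] at this
  simpa using this

theorem mem_cut_single {g : E} {x y p : V} (h : G.I g = s(x, y)) :
    g ∈ G.edgeCut {p} ↔ x = p ∨ y = p := by
  rw [mem_cut h]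
  have := I_ne h
  simp only [Set.mem_singleton_iff]
  constructor
  · tauto
  · rintro (rfl | rfl)
    · left; exact ⟨rfl, fun h => this h.symm⟩
    · right; exact ⟨rfl, this⟩

theorem exists_ends (G : Grapht V E) (g : E) : ∃ x y, G.I g = s(x, y) := by
  induction h : G.I g with
  | _ x y => exact ⟨x, y, rfl⟩

theorem wk_mem_verts {l : List (V × E × V)} {a b : V} (h : Wk G a l b) {d} (hd : d ∈ l) :
    d.1 ∈ vs l ∧ d.2.2 ∈ ts l ∧ (d.1 ∈ a :: ts l) ∧ (d.2.2 ∈ vs l ++ [b]) := by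
  have h1 : d.1 ∈ vs l := List.mem_map.2 ⟨d, hd, rfl⟩
  have h2 : d.2.2 ∈ ts l := List.mem_map.2 ⟨d, hd, rfl⟩
  refine ⟨h1, h2, ?_, ?_⟩
  · rw [← wk_verts h]; simp [h1]
  · rw [wk_verts h]; simp [h2]

theorem es_nodup {l : List (V × E × V)} : ∀ {a b : V}, Wk G a l b → (vs l ++ [b]).Nodup → (es l).Nodup := by
  induction l with
  | nil => simp
  | cons d l ih =>
    intro a b h hn
    obtain ⟨h1, h2, h3⟩ := h
    simp only [vs_cons, List.cons_append, List.nodup_cons] at hn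
    simp only [es_cons, List.nodup_cons]
    refine ⟨fun hmem => ?_, ih h3 hn.2⟩
    obtain ⟨x, y, hd⟩ := mem_es.1 hmem
    have e1 := wk_inc h3 _ hd
    simp only at e1
    rw [h2, Sym2.eq_iff] at e1
    have m := wk_mem_verts h3 hd
    simp only at m
    rcases e1 with ⟨e1, _⟩ | ⟨e1, _⟩
    · apply hn.1; rw [e1]; exact List.mem_append_left _ m.1
    · apply hn.1; rw [e1]; exact m.2.2.2

open Classical in
theorem parity_count (Y : Set V) {l : List (V × E × V)} : ∀ {a b : V}, Wk G a l b →
    (Odd ((es l).filter (fun g => g ∈ G.edgeCut Y)).length ↔ ¬ (a ∈ Y ↔ b ∈ Y)) := by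
  induction l with
  | nil => intro a b h; simp at h; simp [h]
  | cons d l ih =>
    intro a b h
    obtain ⟨h1, h2, h3⟩ := h
    have := ih h3
    have hc := mem_cut h2 Y
    rw [h1] at hc
    by_cases hd : d.2.1 ∈ G.edgeCut Y
    · simp only [es_cons, hd, decide_true, List.filter_cons_of_pos, List.length_cons, Nat.odd_add_one, this]
      rw [hc] at hd
      tauto
    · simp only [es_cons, hd, decide_false, Bool.false_eq_true, not_false_eq_true, List.filter_cons_of_neg, this]
      rw [hc] at hd
      tauto

theorem parity_walk (Y : Set V) {l : List (V × E × V)} {a b : V} (h : Wk G a l b) (hn : (es l).Nodup) :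
    ({g | g ∈ es l} ∩ G.edgeCut Y).Finite ∧
    (Odd ({g | g ∈ es l} ∩ G.edgeCut Y).ncard ↔ ¬ (a ∈ Y ↔ b ∈ Y)) := by
  classical
  have e : ({g | g ∈ es l} ∩ G.edgeCut Y) = (((es l).filter (fun g => g ∈ G.edgeCut Y)).toFinset : Set E) := by
    ext g; simp
  rw [← parity_count Y h, e, Set.ncard_coe_finset, List.toFinset_card_of_nodup (hn.filter _)]
  exact ⟨Finset.finite_toSet _, Iff.rfl⟩

/-- connected edge sets witnessing linkedness of `p` on the index set `D` -/
def Sys (G : Grapht V E) (H : Set E) (p : V) (D : Set E) (C : E → Set E) : Prop :=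
  (∀ g ∈ D, g ∈ C g ∧ C g ⊆ H ∧ (∀ k ∈ C g, k ∈ G.edgeCut {p} → k = g) ∧
    ∃ q ∈ G.T, q ≠ p ∧ Con G (C g) p q) ∧
  ∀ g ∈ D, ∀ g' ∈ D, g ≠ g' → ∀ k ∈ C g, k ∉ C g'

/-- `p` is linked inside the edge set `H` -/
def LK (G : Grapht V E) (H : Set E) (p : V) : Prop := ∃ C, Sys G H p (G.edgeCut {p} ∩ H) C

theorem lk_of_weak {H : Set E} {p : V} (C : E → Set E)
    (h1 : ∀ g ∈ G.edgeCut {p} ∩ H, g ∈ C g ∧ C g ⊆ H ∧ ∃ q ∈ G.T, q ≠ p ∧ Con G (C g) p q)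
    (h2 : ∀ g ∈ G.edgeCut {p} ∩ H, ∀ g' ∈ G.edgeCut {p} ∩ H, g ≠ g' → ∀ k ∈ C g, k ∉ C g') :
    LK G H p := by
  refine ⟨C, fun g hg => ⟨(h1 g hg).1, (h1 g hg).2.1, fun k hk hkp => ?_, (h1 g hg).2.2⟩, h2⟩
  by_contra hne
  have hk' : k ∈ G.edgeCut {p} ∩ H := ⟨hkp, (h1 g hg).2.1 hk⟩
  exact h2 g hg k hk' (fun h => hne h.symm) k hk (h1 k hk').1

/-- a trail starting with `g` from `p` to another terminal -/
def PT (G : Grapht V E) (H : Set E) (p : V) (g : E) (s : List (V × E × V)) : Prop :=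
  ∃ v l q, s = (p, g, v) :: l ∧ Wk G p s q ∧ q ∈ G.T ∧ q ≠ p ∧ (es s).Nodup ∧ ∀ k ∈ es s, k ∈ H

/-- system of trails -/
def PSys (G : Grapht V E) (H : Set E) (p : V) (D : Set E) (S : E → List (V × E × V)) : Prop :=
  (∀ g ∈ D, PT G H p g (S g)) ∧ ∀ g ∈ D, ∀ g' ∈ D, g ≠ g' → ∀ k ∈ es (S g), k ∉ es (S g')

theorem Wk.first_cut {p q : V} {l : List (V × E × V)} (h : Wk G p l q) (hne : q ≠ p) :
    ∃ d l', l = d :: l' ∧ d.1 = p ∧ d.2.1 ∈ G.edgeCut {p} ∧ d.2.1 ∈ es l := by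
  cases l with
  | nil => simp at h; exact absurd h.symm hne
  | cons d l =>
    refine ⟨d, l, rfl, h.1, ?_, by simp⟩
    rw [mem_cut_single h.2.1]; left; exact h.1

theorem sys_psys {H : Set E} {p : V} {D : Set E} {C : E → Set E} (h : Sys G H p D C) :
    ∃ S, PSys G H p D S ∧ ∀ g ∈ D, ∀ k ∈ es (S g), k ∈ C g := by
  have : ∀ g, ∃ s, g ∈ D → PT G H p g s ∧ ∀ k ∈ es s, k ∈ C g := by
    intro g
    by_cases hg : g ∈ D
    · obtain ⟨h1, h2, h3, q, hq, hqp, hc⟩ := h.1 g hg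
      obtain ⟨l, hl1, hl2, hl3⟩ := hc.path
      obtain ⟨d, l', rfl, hd1, hd2, hd3⟩ := hl1.first_cut hqp
      have := h3 _ (hl3 _ hd3) hd2
      obtain ⟨x, k, y⟩ := d
      simp only at hd1 this
      subst hd1; subst this
      exact ⟨_, fun _ => ⟨⟨y, l', q, rfl, hl1, hq, hqp, es_nodup hl1 hl2, fun k hk => h2 (hl3 k hk)⟩, hl3⟩⟩
    · exact ⟨[], fun h => absurd h hg⟩
  choose S hS using this
  refine ⟨S, ⟨fun g hg => (hS g hg).1, fun g hg g' hg' hne k hk hk' => ?_⟩, fun g hg => (hS g hg).2⟩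
  exact h.2 g hg g' hg' hne k ((hS g hg).2 k hk) ((hS g' hg').2 k hk')

theorem PT.mem {H : Set E} {p : V} {g : E} {s} (h : PT G H p g s) : g ∈ es s := by
  obtain ⟨v, l, q, rfl, _⟩ := h; simp

theorem PT.con {H : Set E} {p : V} {g : E} {s} (h : PT G H p g s) :
    ∃ q ∈ G.T, q ≠ p ∧ Con G {k | k ∈ es s} p q := by
  obtain ⟨v, l, q, rfl, hw, hq, hqp, _⟩ := h
  exact ⟨q, hq, hqp, hw.con (fun g hg => hg)⟩

theorem PT.sub {H : Set E} {p : V} {g : E} {s} (h : PT G H p g s) : ∀ k ∈ es s, k ∈ H := by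
  obtain ⟨v, l, q, rfl, hw, hq, hqp, _, h⟩ := h
  exact h

theorem psys_lk {H : Set E} {p : V} {S} (h : PSys G H p (G.edgeCut {p} ∩ H) S) : LK G H p :=
  lk_of_weak (fun g => {k | k ∈ es (S g)})
    (fun g hg => ⟨(h.1 g hg).mem, (h.1 g hg).sub, (h.1 g hg).con⟩) h.2

theorem psys_cut {H : Set E} {p : V} {S} (h : PSys G H p (G.edgeCut {p} ∩ H) S) {g k : E}
    (hg : g ∈ G.edgeCut {p} ∩ H) (hk : k ∈ es (S g)) (hkp : k ∈ G.edgeCut {p}) : k = g := by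
  by_contra hne
  have hk' : k ∈ G.edgeCut {p} ∩ H := ⟨hkp, (h.1 g hg).sub k hk⟩
  exact h.2 g hg k hk' (fun h => hne h.symm) k hk (h.1 k hk').mem

theorem lk_psys {H : Set E} {p : V} (h : LK G H p) : ∃ S, PSys G H p (G.edgeCut {p} ∩ H) S := by
  obtain ⟨C, hC⟩ := h
  obtain ⟨S, hS, _⟩ := sys_psys hC
  exact ⟨S, hS⟩

theorem trunc {l : List (V × E × V)} (T : Set V) : ∀ {a q : V}, Wk G a l q → q ∈ T →
    ∃ l1 l2 q', l = l1 ++ l2 ∧ Wk G a l1 q' ∧ q' ∈ T ∧ ∀ x ∈ vs l1, x ∉ T := by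
  induction l with
  | nil => intro a q h hq; exact ⟨[], [], q, rfl, h, hq, by simp⟩
  | cons d l ih =>
    intro a q h hq
    by_cases ha : a ∈ T
    · exact ⟨[], d :: l, a, rfl, rfl, ha, by simp⟩
    · obtain ⟨h1, h2, h3⟩ := h
      obtain ⟨l1, l2, q', rfl, hw, hq', hx⟩ := ih h3 hq
      refine ⟨d :: l1, l2, q', rfl, ⟨h1, h2, hw⟩, hq', ?_⟩
      intro x hx'
      rcases List.mem_cons.1 hx' with rfl | hx'
      · show d.1 ∉ T
        rw [h1]; exact ha
      · exact hx x hx'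

theorem tpath_of_con {C : Set E} {p q : V} (h : Con G C p q) (hq : q ∈ G.T) (hqp : q ≠ p) :
    ∃ d l q', Wk G p (d :: l) q' ∧ q' ∈ G.T ∧ q' ≠ p ∧ (vs (d :: l) ++ [q']).Nodup ∧
      (∀ g ∈ es (d :: l), g ∈ C) ∧ ∀ x ∈ vs l, x ∉ G.T := by
  obtain ⟨l, hl1, hl2, hl3⟩ := h.path
  obtain ⟨d, l', rfl, hd1, hd2, hd3⟩ := hl1.first_cut hqp
  obtain ⟨l1, l2, q', rfl, hw, hq', hx⟩ := trunc G.T hl1.2.2 hq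
  have hw' : Wk G p (d :: l1) q' := ⟨hl1.1, hl1.2.1, hw⟩
  have hn : (vs (d :: l1) ++ [q']).Nodup := by
    rw [wk_verts hw']
    rw [wk_verts hl1] at hl2
    refine List.Nodup.sublist ?_ hl2
    simp
  refine ⟨d, l1, q', hw', hq', ?_, hn, fun g hg => hl3 g ?_, hx⟩
  · rintro rfl
    rw [vs_cons, hd1] at hn
    simp at hn
  · simp at hg ⊢; tauto

theorem isWalk_of_wk {l : List (V × E × V)} : ∀ {a b : V}, Wk G a l b → G.IsWalk (a :: ts l) (es l) := by
  induction l with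
  | nil => intro a b _; exact IsWalk.nil _
  | cons d l ih =>
    intro a b h
    obtain ⟨h1, h2, h3⟩ := h
    rw [h1] at h2
    exact IsWalk.cons h2 (ih h3)

theorem exists_Path {d : V × E × V} {l : List (V × E × V)} {a b : V} (h : Wk G a (d :: l) b)
    (hn : (vs (d :: l) ++ [b]).Nodup) :
    ∃ P : G.Path, P.first = a ∧ P.last = b ∧ P.edges = es (d :: l) ∧ P.inner = vs l := by
  have hv := wk_verts h
  refine ⟨⟨a, b, a :: ts (d :: l), es (d :: l), isWalk_of_wk h, hv ▸ hn, by simp, ?_⟩, rfl, rfl, rfl, ?_⟩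
  · rw [← hv, List.getLast?_append]; simp
  · simp only [Path.inner]
    rw [← hv]; simp

theorem wk_of_isWalk {xs : List V} {gs : List E} (h : G.IsWalk xs gs) : ∀ {a b : V},
    xs.head? = some a → xs.getLast? = some b → ∃ l, Wk G a l b ∧ vs l ++ [b] = xs ∧ es l = gs := by
  induction h with
  | nil v =>
    intro a b ha hb
    simp at ha hb; subst ha; subst hb
    exact ⟨[], rfl, rfl, rfl⟩
  | cons hI _ ih =>
    rename_i x w ws g gs _
    intro a b ha hb
    simp at ha; subst ha
    obtain ⟨l, h1, h2, h3⟩ := ih (a := w) (b := b) (by simp) (by simpa using hb)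
    exact ⟨(x, g, w) :: l, ⟨rfl, hI, h1⟩, by simp [h2], by simp [h3]⟩

theorem wk_of_path (P : G.Path) : ∃ l, Wk G P.first l P.last ∧ (vs l ++ [P.last]).Nodup ∧
    es l = P.edges ∧ P.inner = (vs l).tail := by
  obtain ⟨l, h1, h2, h3⟩ := wk_of_isWalk P.isWalk P.head_eq P.getLast_eq
  refine ⟨l, h1, h2 ▸ P.nodup, h3, ?_⟩
  simp only [Path.inner, ← h2]
  cases l <;> simp

theorem wk_restrict {H : Set E} {l : List (V × E × V)} : ∀ {a b : V}, Wk G a l b → (∀ g ∈ es l, g ∈ H) →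
    ∃ l' : List (V × H × V), Wk (G.restrict H) a l' b ∧ vs l' = vs l ∧
      (es l').map Subtype.val = es l := by
  induction l with
  | nil => intro a b h _; exact ⟨[], h, rfl, rfl⟩
  | cons d l ih =>
    intro a b h hH
    obtain ⟨h1, h2, h3⟩ := h
    obtain ⟨l', i1, i2, i3⟩ := ih h3 (fun g hg => hH g (by simp [hg]))
    exact ⟨(d.1, ⟨d.2.1, hH _ (by simp)⟩, d.2.2) :: l', ⟨h1, h2, i1⟩, by simp [i2], by simp [i3]⟩

theorem cut_restrict (H : Set E) (X : Set V) (g : H) :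
    g ∈ (G.restrict H).edgeCut X ↔ g.1 ∈ G.edgeCut X := Iff.rfl

theorem linked_restrict {H : Set E} {p : V} (hp : p ∈ G.T) (h : LK G H p) : (G.restrict H).Linked p := by
  obtain ⟨C, hC1, hC2⟩ := h
  have : ∀ g : E, ∃ P : (G.restrict H).Path, g ∈ G.edgeCut {p} ∩ H →
      (G.restrict H).IsTPath P ∧ g ∈ P.edges.map Subtype.val ∧ ∀ k ∈ P.edges, k.1 ∈ C g := by
    intro g
    by_cases hg : g ∈ G.edgeCut {p} ∩ H
    · obtain ⟨h1, h2, h3, q, hq, hqp, hc⟩ := hC1 g hg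
      obtain ⟨d, l, q', hw, hq', hne, hn, hCl, hin⟩ := tpath_of_con hc hq hqp
      obtain ⟨l', i1, i2, i3⟩ := wk_restrict hw (fun g hg => h2 (hCl g hg))
      cases l' with
      | nil => simp at i2
      | cons d' l' =>
        simp only [vs_cons, List.cons.injEq] at i2
        obtain ⟨P, p1, p2, p3, p4⟩ := exists_Path i1 (by rw [vs_cons, i2.1, i2.2]; exact hn)
        refine ⟨P, fun _ => ⟨⟨p1 ▸ hp, p2 ▸ hq', ?_, ?_⟩, ?_, ?_⟩⟩
        · rw [p1, p2]; exact hne.symm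
        · rw [p4, i2.2]; exact hin
        · rw [p3, i3]
          have := h3 d.2.1 (hCl _ (by simp)) (by rw [mem_cut_single hw.2.1]; left; exact hw.1)
          simp [← this]
        · intro k hk
          apply hCl
          rw [← i3, ← p3]
          exact List.mem_map_of_mem hk
    · exact ⟨⟨p, p, [p], [], IsWalk.nil p, by simp, rfl, rfl⟩, fun h => absurd h hg⟩
  choose P hP using this
  refine ⟨P '' (G.edgeCut {p} ∩ H), ⟨?_, ?_⟩, ?_⟩
  · rintro _ ⟨g, hg, rfl⟩ _ ⟨g', hg', rfl⟩ hne k hk hk'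
    have : g ≠ g' := fun h => hne (by rw [h])
    exact hC2 g hg g' hg' this _ ((hP g hg).2.2 k hk) ((hP g' hg').2.2 k hk')
  · rintro _ ⟨g, hg, rfl⟩; exact (hP g hg).1
  · intro g hg
    have hg' : g.1 ∈ G.edgeCut {p} ∩ H := ⟨hg, g.2⟩
    refine ⟨P g.1, ⟨g.1, hg', rfl⟩, ?_⟩
    have := (hP g.1 hg').2.1
    simpa using this

theorem lk_of_linked {p : V} (hp : p ∈ G.T) (h : G.Linked p) : LK G Set.univ p := by
  obtain ⟨Ps, ⟨hd, hT⟩, hcov⟩ := h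
  have : ∀ g, ∃ C : Set E, g ∈ G.edgeCut {p} → (∃ P ∈ Ps, C = {k | k ∈ P.edges}) ∧ g ∈ C ∧
      (∀ k ∈ C, k ∈ G.edgeCut {p} → k = g) ∧ ∃ q ∈ G.T, q ≠ p ∧ Con G C p q := by
    intro g
    by_cases hg : g ∈ G.edgeCut {p}
    · obtain ⟨P, hP, hgP⟩ := hcov g hg
      refine ⟨{k | k ∈ P.edges}, fun _ => ⟨⟨P, hP, rfl⟩, hgP, ?_⟩⟩
      obtain ⟨l, h1, h2, h3, h4⟩ := wk_of_path P
      obtain ⟨t1, t2, t3, t4⟩ := hT P hP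
      have hcon : Con G {k | k ∈ P.edges} P.first P.last := h1.con (fun g hg => h3 ▸ hg)
      obtain ⟨d, l', rfl, hd1, hd2, hd3⟩ := h1.first_cut t3.symm
      rw [h4] at t4
      simp only [vs_cons, List.tail_cons] at t4
      have hpl : p ∉ vs l' := fun h => t4 p h hp
      have hvv := wk_verts h1
      have hvv' := wk_verts h1.2.2
      have h2' := h2
      rw [hvv] at h2'
      have key : ∀ k ∈ P.edges, k ∈ G.edgeCut {p} → ∃ x y, (x, k, y) ∈ d :: l' ∧ (x = p ∨ y = p) := by
        intro k hk hkp
        rw [← h3] at hk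
        obtain ⟨x, y, hxy⟩ := mem_es.1 hk
        exact ⟨x, y, hxy, (mem_cut_single (wk_inc h1 _ hxy)).1 hkp⟩
      have hvn : (vs (d :: l')).Nodup := (List.nodup_append.1 h2).1
      have htn : (ts (d :: l')).Nodup := (List.nodup_cons.1 h2').2
      have hlast : P.last ∉ vs (d :: l') := by
        intro hm
        exact (List.nodup_append.1 h2).2.2 _ hm P.last (by simp) rfl
      have hfirst : P.first ∉ ts (d :: l') := (List.nodup_cons.1 h2').1
      have inj1 : ∀ a ∈ d :: l', ∀ b ∈ d :: l', a.1 = b.1 → a = b := fun a ha b hb h =>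
        List.inj_on_of_nodup_map hvn ha hb h
      have inj2 : ∀ a ∈ d :: l', ∀ b ∈ d :: l', a.2.2 = b.2.2 → a = b := fun a ha b hb h =>
        List.inj_on_of_nodup_map htn ha hb h
      have hpend : p = P.first ∨ p = P.last := by
        obtain ⟨x, y, hxy, hx⟩ := key g hgP hg
        have hm := wk_mem_verts h1 hxy
        have : p ∈ vs (d :: l') ++ [P.last] := by
          rcases hx with rfl | rfl
          · exact List.mem_append_left _ hm.1
          · exact hm.2.2.2
        simp only [vs_cons, List.cons_append, List.mem_cons, List.mem_append, List.not_mem_nil, or_false] at this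
        rcases this with h | h | h
        · left; rw [h, hd1]
        · exact absurd h hpl
        · right; exact h
      rcases hpend with hpe | hpe
      · refine ⟨?_, P.last, t2, ?_, ?_⟩
        · intro k hk hkp
          obtain ⟨x, y, hxy, hx⟩ := key k hk hkp
          obtain ⟨x', y', hxy', hx'⟩ := key g hgP hg
          have e1 : x = p := hx.resolve_right (fun h => hfirst (by
            rw [← hpe, ← h]; exact (wk_mem_verts h1 hxy).2.1))
          have e2 : x' = p := hx'.resolve_right (fun h => hfirst (by
            rw [← hpe, ← h]; exact (wk_mem_verts h1 hxy').2.1))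
          have := inj1 _ hxy _ hxy' (by simp [e1, e2])
          simp at this; exact this.2.1
        · rw [hpe]; exact t3.symm
        · rw [hpe]; exact hcon
      · refine ⟨?_, P.first, t1, ?_, ?_⟩
        · intro k hk hkp
          obtain ⟨x, y, hxy, hx⟩ := key k hk hkp
          obtain ⟨x', y', hxy', hx'⟩ := key g hgP hg
          have e1 : y = p := hx.resolve_left (fun h => hlast (by
            rw [← hpe, ← h]; exact (wk_mem_verts h1 hxy).1))
          have e2 : y' = p := hx'.resolve_left (fun h => hlast (by
            rw [← hpe, ← h]; exact (wk_mem_verts h1 hxy').1))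
          have := inj2 _ hxy _ hxy' (by simp [e1, e2])
          simp at this; exact this.2.1
        · rw [hpe]; exact t3
        · rw [hpe]; exact hcon.symm
    · exact ⟨∅, fun h => absurd h hg⟩
  choose C hC using this
  refine ⟨C, fun g hg => ⟨(hC g hg.1).2.1, Set.subset_univ _, (hC g hg.1).2.2⟩, ?_⟩
  intro g hg g' hg' hne k hk hk'
  obtain ⟨⟨P, hP, eP⟩, m1, m2, _⟩ := hC g hg.1
  obtain ⟨⟨P', hP', eP'⟩, m1', m2', _⟩ := hC g' hg'.1
  have : P ≠ P' := by
    rintro rfl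
    apply hne
    apply m2' g _ hg.1
    rw [eP', ← eP]; exact m1
  rw [eP] at hk; rw [eP'] at hk'
  exact hd hP hP' this k hk hk'

/-- inner Eulerian within `H` -/
def EulIn (G : Grapht V E) (H : Set E) : Prop :=
  ∀ X : Set V, Disjoint X G.T → ¬ ((G.edgeCut X ∩ H).Finite ∧ Odd (G.edgeCut X ∩ H).ncard)

theorem eulIn_restrict {H : Set E} (h : EulIn G H) : (G.restrict H).InnerEulerian := by
  intro X hX hodd
  have e : G.edgeCut X ∩ H = Subtype.val '' ((G.restrict H).edgeCut X) := by
    ext g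
    constructor
    · rintro ⟨h1, h2⟩; exact ⟨⟨g, h2⟩, h1, rfl⟩
    · rintro ⟨g', h1, rfl⟩; exact ⟨h1, g'.2⟩
  apply h X hX
  rw [e, Set.ncard_image_of_injective _ Subtype.val_injective]
  exact ⟨hodd.1.image _, hodd.2⟩

theorem eulIn_remove (h : G.InnerEulerian) {l : List (V × E × V)} {a b : V} (hw : Wk G a l b)
    (hn : (es l).Nodup) (ha : a ∈ G.T) (hb : b ∈ G.T) : EulIn G {g | g ∈ es l}ᶜ := by
  intro X hX hodd
  have haX : a ∉ X := fun h => Set.disjoint_left.1 hX h ha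
  have hbX : b ∉ X := fun h => Set.disjoint_left.1 hX h hb
  obtain ⟨f1, f2⟩ := parity_walk X hw hn
  have e : G.edgeCut X = (G.edgeCut X ∩ {g | g ∈ es l}ᶜ) ∪ ({g | g ∈ es l} ∩ G.edgeCut X) := by
    ext g; simp; tauto
  have hdis : Disjoint (G.edgeCut X ∩ {g | g ∈ es l}ᶜ) ({g | g ∈ es l} ∩ G.edgeCut X) := by
    rw [Set.disjoint_left]; rintro g ⟨_, h1⟩ ⟨h2, _⟩; exact h1 h2
  apply h X hX
  rw [e]
  refine ⟨hodd.1.union f1, ?_⟩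
  rw [Set.ncard_union_eq hdis hodd.1 f1]
  refine hodd.2.add_even ?_
  rw [← Nat.not_odd_iff_even, f2]
  simp [haX, hbX]

theorem con_avoid {U : Set E} {p x y : V} (hU : ∀ k ∈ U, k ∉ G.edgeCut {p}) (hx : x ≠ p)
    (h : Con G U x y) : y ≠ p := by
  induction h with
  | refl => exact hx
  | tail _ h _ =>
    obtain ⟨g, hg, hI⟩ := h
    rintro rfl
    exact hU g hg ((mem_cut_single hI).2 (Or.inr rfl))

theorem even_biUnion {J : Set E} (hJ : J.Finite) (B : E → Set E)
    (hf : ∀ g ∈ J, (B g).Finite ∧ Even (B g).ncard)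
    (hd : ∀ g ∈ J, ∀ g' ∈ J, g ≠ g' → ∀ k ∈ B g, k ∉ B g') :
    (⋃ g ∈ J, B g).Finite ∧ Even (⋃ g ∈ J, B g).ncard := by
  induction J, hJ using Set.Finite.induction_on with
  | empty => simp
  | insert ha _ ih =>
    rename_i a J _
    obtain ⟨i1, i2⟩ := ih (fun g hg => hf g (Set.mem_insert_of_mem _ hg))
      (fun g hg g' hg' => hd g (Set.mem_insert_of_mem _ hg) g' (Set.mem_insert_of_mem _ hg'))
    obtain ⟨f1, f2⟩ := hf a (Set.mem_insert _ _)
    rw [Set.biUnion_insert]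
    refine ⟨f1.union i1, ?_⟩
    rw [Set.ncard_union_eq _ f1 i1]
    · exact f2.add i2
    · rw [Set.disjoint_left]
      intro k hk hk'
      simp only [Set.mem_iUnion] at hk'
      obtain ⟨g, hg, hk'⟩ := hk'
      exact hd a (Set.mem_insert _ _) g (Set.mem_insert_of_mem _ hg) (fun h => ha (h ▸ hg)) k hk hk'

theorem odd_union {A B : Set E} (hA : A.Finite) (hB : B.Finite) (hd : ∀ k ∈ A, k ∉ B) :
    Odd (A ∪ B).ncard ↔ ¬ (Odd A.ncard ↔ Odd B.ncard) := by
  rw [Set.ncard_union_eq (Set.disjoint_left.2 hd) hA hB, Nat.odd_add, ← Nat.not_odd_iff_even]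
  tauto

/-- state of the infinite shifting construction -/
structure ShiftState (V : Type u) (E : Type v) where
  F : Set E
  z : V
  g : E
  J : Set E
  pre : List (V × E × V)
  suf : List (V × E × V)

/-- invariant of the shifting construction -/
structure ShiftInv (G : Grapht V E) (D U : Set E) (p : V) (a : E) (va : V)
    (L : E → List (V × E × V)) (s : ShiftState V E) : Prop where
  finF : s.F.Finite
  subF : ∀ k ∈ s.F, k ∈ U ∨ k = a
  aF : a ∈ s.F
  finJ : s.J.Finite
  gJ : s.g ∈ s.J
  aJ : a ∈ s.J
  subJ : s.J ⊆ D
  zp : s.z ≠ p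
  zcon : Con G U va s.z
  spl : L s.g = s.pre ++ s.suf
  wpre : Wk G p s.pre s.z
  par : ∀ Y : Set V, p ∉ Y → (Odd (s.F ∩ G.edgeCut Y).ncard ↔ s.z ∈ Y)

/-- one step of the shifting construction -/
structure ShiftStep (G : Grapht V E) (s s' : ShiftState V E) : Prop where
  sub : s.F ⊆ s'.F
  con : Con G (s'.F \ s.F) s.z s'.z
  new : s'.g ∉ s.J
  subJ : s.J ⊆ s'.J

theorem shift_step {H : Set E} {p a va} {L : E → List (V × E × V)}
    (hE : EulIn G H) (hp : p ∈ G.T)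
    (ha : G.I a = s(p, va)) (haH : a ∈ H)
    (hLw : ∀ g ∈ G.edgeCut {p} ∩ H, ∃ q, Wk G p (L g) q ∧ (g ≠ a → q ∈ G.T ∧ q ≠ p))
    (hLn : ∀ g ∈ G.edgeCut {p} ∩ H, (es (L g)).Nodup)
    (hLa : es (L a) = [a])
    (hLH : ∀ g ∈ G.edgeCut {p} ∩ H, ∀ k ∈ es (L g), k ∈ H)
    (hLg : ∀ g ∈ G.edgeCut {p} ∩ H, g ∈ es (L g))
    (hLd : ∀ g ∈ G.edgeCut {p} ∩ H, ∀ g' ∈ G.edgeCut {p} ∩ H, g ≠ g' → ∀ k ∈ es (L g), k ∉ es (L g'))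
    (U : Set E) (hU : U = {k | k ∈ H ∧ ∀ g ∈ G.edgeCut {p} ∩ H, k ∉ es (L g)})
    (hK0 : ∀ y, Con G U va y → y ∉ G.T)
    (s : ShiftState V E) (hs : ShiftInv G (G.edgeCut {p} ∩ H) U p a va L s) :
    ∃ s', ShiftInv G (G.edgeCut {p} ∩ H) U p a va L s' ∧ ShiftStep G s s' := by
  classical
  have hUp : ∀ k ∈ U, k ∉ G.edgeCut {p} := by
    intro k hk hkp
    rw [hU] at hk
    exact hk.2 k ⟨hkp, hk.1⟩ (hLg k ⟨hkp, hk.1⟩)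
  have hUL : ∀ k ∈ U, ∀ g ∈ G.edgeCut {p} ∩ H, k ∉ es (L g) := by
    intro k hk; rw [hU] at hk; exact hk.2
  have hUH : ∀ k ∈ U, k ∈ H := by
    intro k hk; rw [hU] at hk; exact hk.1
  have haD : a ∈ G.edgeCut {p} ∩ H := ⟨(mem_cut_single ha).2 (Or.inl rfl), haH⟩
  set K : Set V := {y | Con G (U \ s.F) s.z y} with hK
  have hpK : p ∉ K := fun h => con_avoid (fun k hk => hUp k hk.1) hs.zp h rfl
  have hKT : ∀ y ∈ K, y ∉ G.T := fun y hy => hK0 y (hs.zcon.trans (Con.mono Set.sdiff_subset hy))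
  have hzK : s.z ∈ K := Con.refl _ _
  have main : ∃ g' ∈ G.edgeCut {p} ∩ H, g' ∉ s.J ∧ ∃ d ∈ L g', d.2.2 ∈ K := by
    by_contra hcon
    push Not at hcon
    have hcon' : ∀ g' ∈ G.edgeCut {p} ∩ H, g' ∉ s.J → ∀ k ∈ es (L g'), k ∉ G.edgeCut K := by
      intro g' hg' hgJ k hk hkK
      obtain ⟨q, hq, _⟩ := hLw g' hg'
      obtain ⟨x, y, hd⟩ := mem_es.1 hk
      have hy := hcon g' hg' hgJ _ hd
      have hx : x ∉ K := by
        have := (wk_mem_verts hq hd).2.2.1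
        simp only [List.mem_cons] at this
        rcases this with h | h
        · rw [h]; exact hpK
        · obtain ⟨d', hd', e⟩ := List.mem_map.1 h
          rw [← e]; exact hcon g' hg' hgJ _ hd'
      rw [mem_cut (wk_inc hq _ hd)] at hkK
      simp only at hkK hy
      tauto
    have hcov : G.edgeCut K ∩ H = (s.F ∩ G.edgeCut K) ∪
        ⋃ g ∈ s.J \ {a}, ({k | k ∈ es (L g)} ∩ G.edgeCut K) := by
      ext k
      constructor
      · rintro ⟨hkK, hkH⟩
        by_cases hkF : k ∈ s.F
        · left; exact ⟨hkF, hkK⟩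
        · by_cases hkU : k ∈ U
          · exfalso
            obtain ⟨x, y, hI, hx, hy⟩ := hkK
            exact hy (hx.trans (Con.single ⟨hkU, hkF⟩ hI))
          · right
            have : ∃ g ∈ G.edgeCut {p} ∩ H, k ∈ es (L g) := by
              by_contra hno
              push Not at hno
              exact hkU (by rw [hU]; exact ⟨hkH, hno⟩)
            obtain ⟨g, hg, hkg⟩ := this
            have hga : g ≠ a := by
              rintro rfl
              rw [hLa] at hkg
              simp at hkg
              exact hkF (hkg ▸ hs.aF)
            have hgJ : g ∈ s.J := by
              by_contra hgJ
              exact hcon' g hg hgJ k hkg hkK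
            simp only [Set.mem_iUnion]
            exact ⟨g, ⟨hgJ, hga⟩, hkg, hkK⟩
      · rintro (⟨h1, h2⟩ | h)
        · refine ⟨h2, ?_⟩
          rcases hs.subF k h1 with h | h
          · exact hUH k h
          · rw [h]; exact haH
        · simp only [Set.mem_iUnion] at h
          obtain ⟨g, ⟨hgJ, hga⟩, hkg, hkK⟩ := h
          exact ⟨hkK, hLH g (hs.subJ hgJ) k hkg⟩
    obtain ⟨b1, b2⟩ := even_biUnion (J := s.J \ {a}) (hs.finJ.subset Set.sdiff_subset)
      (fun g => ({k | k ∈ es (L g)} ∩ G.edgeCut K)) (by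
        intro g hg
        obtain ⟨q, hq, hq'⟩ := hLw g (hs.subJ hg.1)
        obtain ⟨f1, f2⟩ := parity_walk K hq (hLn g (hs.subJ hg.1))
        refine ⟨f1, ?_⟩
        rw [← Nat.not_odd_iff_even, f2]
        have : q ∉ K := fun h => hKT q h (hq' hg.2).1
        tauto) (by
        intro g hg g' hg' hne k hk hk'
        exact hLd g (hs.subJ hg.1) g' (hs.subJ hg'.1) hne k hk.1 hk'.1)
    have hFf : (s.F ∩ G.edgeCut K).Finite := hs.finF.subset Set.inter_subset_left
    refine hE K (Set.disjoint_left.2 hKT) ⟨?_, ?_⟩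
    · rw [hcov]; exact hFf.union b1
    · rw [hcov, odd_union hFf b1]
      · rw [hs.par K hpK]
        rw [← Nat.not_odd_iff_even] at b2
        tauto
      · intro k hk hk'
        simp only [Set.mem_iUnion] at hk'
        obtain ⟨g, ⟨hgJ, hga⟩, hkg, hkK⟩ := hk'
        rcases hs.subF k hk.1 with h | h
        · exact hUL k h g (hs.subJ hgJ) hkg
        · subst h
          exact hLd g (hs.subJ hgJ) k haD hga k hkg (by rw [hLa]; simp)
  obtain ⟨g', hg', hgJ, d, hd, hdK⟩ := main
  obtain ⟨q, hq, _⟩ := hLw g' hg'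
  obtain ⟨l1, l2, hl⟩ := List.append_of_mem hd
  have hdK' : Con G (U \ s.F) s.z d.2.2 := hdK
  obtain ⟨τ, t1, t2, t3⟩ := hdK'.path
  have t4 := es_nodup t1 t2
  refine ⟨⟨s.F ∪ {k | k ∈ es τ}, d.2.2, g', insert g' s.J, l1 ++ [d], l2⟩, ?_, ?_⟩
  · refine ⟨hs.finF.union (List.finite_toSet _), ?_, Or.inl hs.aF, hs.finJ.insert _, Set.mem_insert _ _,
      Set.mem_insert_of_mem _ hs.aJ, Set.insert_subset hg' hs.subJ, ?_, ?_, ?_, ?_, ?_⟩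
    · rintro k (hk | hk)
      · exact hs.subF k hk
      · left; exact (t3 k hk).1
    · exact fun h => hpK (h ▸ hdK)
    · exact hs.zcon.trans (Con.mono Set.sdiff_subset hdK)
    · simp [hl]
    · rw [hl] at hq
      obtain ⟨c, c1, c2⟩ := wk_append.1 hq
      exact wk_append.2 ⟨c, c1, c2.1, c2.2.1, rfl⟩
    · intro Y hY
      obtain ⟨f1, f2⟩ := parity_walk Y t1 t4
      simp only
      rw [Set.union_inter_distrib_right, odd_union (hs.finF.subset Set.inter_subset_left) f1, f2, hs.par Y hY]
      · tauto
      · intro k hk hk'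
        exact (t3 k hk'.1).2 hk.1
  · refine ⟨Set.subset_union_left, ?_, hgJ, Set.subset_insert _ _⟩
    refine t1.con (fun k hk => ⟨Or.inr hk, (t3 k hk).2⟩)

theorem lemmaA {H : Set E} {p : V} {a : E} {C : E → Set E} (hE : EulIn G H) (hp : p ∈ G.T)
    (h : Sys G H p ((G.edgeCut {p} ∩ H) \ {a}) C) : LK G H p := by
  classical
  by_cases ha : a ∈ G.edgeCut {p} ∩ H
  swap
  · rw [Set.sdiff_singleton_eq_self ha] at h
    exact ⟨C, h⟩
  obtain ⟨S, hS, hSC⟩ := sys_psys h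
  have hva : ∃ va, G.I a = s(p, va) := by
    obtain ⟨x, y, hI, hx, _⟩ := ha.1
    simp at hx; subst hx; exact ⟨y, hI⟩
  obtain ⟨va, hva⟩ := hva
  set L : E → List (V × E × V) := fun g => if g = a then [(p, a, va)] else S g with hL
  have La : L a = [(p, a, va)] := by simp [hL]
  have Lne : ∀ g, g ≠ a → L g = S g := by intro g hg; simp [hL, hg]
  have hLa : es (L a) = [a] := by rw [La]; rfl
  have haS : ∀ g ∈ (G.edgeCut {p} ∩ H) \ {a}, a ∉ es (S g) := by
    intro g hg hag
    exact hg.2 ((h.1 g hg).2.2.1 a (hSC g hg a hag) ha.1).symm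
  have hLw : ∀ g ∈ G.edgeCut {p} ∩ H, ∃ q, Wk G p (L g) q ∧ (g ≠ a → q ∈ G.T ∧ q ≠ p) := by
    intro g hg
    by_cases hga : g = a
    · subst hga
      rw [La]
      exact ⟨va, ⟨rfl, hva, rfl⟩, fun h => absurd rfl h⟩
    · rw [Lne g hga]
      obtain ⟨v, l, q, e, hw, hq, hqp, _⟩ := hS.1 g ⟨hg, hga⟩
      exact ⟨q, hw, fun _ => ⟨hq, hqp⟩⟩
  have hLn : ∀ g ∈ G.edgeCut {p} ∩ H, (es (L g)).Nodup := by
    intro g hg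
    by_cases hga : g = a
    · subst hga; rw [hLa]; simp
    · rw [Lne g hga]
      obtain ⟨v, l, q, e, hw, hq, hqp, hn, _⟩ := hS.1 g ⟨hg, hga⟩
      exact hn
  have hLg : ∀ g ∈ G.edgeCut {p} ∩ H, g ∈ es (L g) := by
    intro g hg
    by_cases hga : g = a
    · subst hga; rw [hLa]; simp
    · rw [Lne g hga]; exact (hS.1 g ⟨hg, hga⟩).mem
  have hLH : ∀ g ∈ G.edgeCut {p} ∩ H, ∀ k ∈ es (L g), k ∈ H := by
    intro g hg
    by_cases hga : g = a
    · subst hga; rw [hLa]; simpa using ha.2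
    · rw [Lne g hga]; exact (hS.1 g ⟨hg, hga⟩).sub
  have hLcut : ∀ g ∈ G.edgeCut {p} ∩ H, ∀ k ∈ es (L g), k ∈ G.edgeCut {p} → k = g := by
    intro g hg k hk hkp
    by_cases hga : g = a
    · subst hga; rw [hLa] at hk; simpa using hk
    · rw [Lne g hga] at hk
      exact (h.1 g ⟨hg, hga⟩).2.2.1 k (hSC g ⟨hg, hga⟩ k hk) hkp
  have hLd : ∀ g ∈ G.edgeCut {p} ∩ H, ∀ g' ∈ G.edgeCut {p} ∩ H, g ≠ g' →
      ∀ k ∈ es (L g), k ∉ es (L g') := by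
    intro g hg g' hg' hne k hk hk'
    by_cases hga : g = a
    · subst hga
      rw [hLa] at hk; simp at hk; subst hk
      rw [Lne g' hne.symm] at hk'
      exact haS g' ⟨hg', hne.symm⟩ hk'
    · by_cases hga' : g' = a
      · subst hga'
        rw [hLa] at hk'; simp at hk'; subst hk'
        rw [Lne g hga] at hk
        exact haS g ⟨hg, hga⟩ hk
      · rw [Lne g hga] at hk
        rw [Lne g' hga'] at hk'
        exact hS.2 g ⟨hg, hga⟩ g' ⟨hg', hga'⟩ hne k hk hk'
  set U : Set E := {k | k ∈ H ∧ ∀ g ∈ G.edgeCut {p} ∩ H, k ∉ es (L g)} with hU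
  have hUp : ∀ k ∈ U, k ∉ G.edgeCut {p} := fun k hk hkp =>
    hk.2 k ⟨hkp, hk.1⟩ (hLg k ⟨hkp, hk.1⟩)
  have hvap : va ≠ p := (I_ne hva).symm
  by_cases hK0 : ∃ y, Con G U va y ∧ y ∈ G.T
  · obtain ⟨y, hy, hyT⟩ := hK0
    have hyp : y ≠ p := con_avoid hUp hvap hy
    refine lk_of_weak (fun g => {k | k ∈ es (L g) ∨ (g = a ∧ k ∈ U)}) ?_ ?_
    · intro g hg
      refine ⟨Or.inl (hLg g hg), ?_, ?_⟩
      · rintro k (hk | hk)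
        · exact hLH g hg k hk
        · exact hk.2.1
      · by_cases hga : g = a
        · subst hga
          refine ⟨y, hyT, hyp, (Con.single (g := g) (Or.inl (hLg g hg)) hva).trans (hy.mono ?_)⟩
          intro k hk; exact Or.inr ⟨rfl, hk⟩
        · obtain ⟨q, hq, hq'⟩ := hLw g hg
          exact ⟨q, (hq' hga).1, (hq' hga).2, hq.con (fun k hk => Or.inl hk)⟩
    · rintro g hg g' hg' hne k (hk | hk) (hk' | hk')
      · exact hLd g hg g' hg' hne k hk hk'
      · exact hk'.2.2 g hg hk
      · exact hk.2.2 g' hg' hk'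
      · exact hne (hk.1.trans hk'.1.symm)
  · push Not at hK0
    have step := shift_step hE hp hva ha.2 hLw hLn hLa hLH hLg hLd U hU hK0
    have start0 : ShiftInv G (G.edgeCut {p} ∩ H) U p a va L ⟨{a}, va, a, {a}, [(p, a, va)], []⟩ := by
      refine ⟨Set.finite_singleton _, ?_, rfl, Set.finite_singleton _, rfl, rfl, ?_, hvap, Con.refl _ _, ?_, ?_, ?_⟩
      · intro k hk; right; exact hk
      · intro k hk; rw [Set.mem_singleton_iff.1 hk]; exact ha
      · simp [La]
      · exact ⟨rfl, hva, rfl⟩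
      · intro Y hY
        have hm := mem_cut hva Y
        simp only
        by_cases hv : va ∈ Y
        · have : ({a} : Set E) ∩ G.edgeCut Y = {a} := by
            ext k; simp only [Set.mem_inter_iff, Set.mem_singleton_iff]
            constructor
            · exact fun h => h.1
            · rintro rfl; exact ⟨rfl, by tauto⟩
          simp [this, hv]
        · have : ({a} : Set E) ∩ G.edgeCut Y = ∅ := by
            ext k; simp only [Set.mem_inter_iff, Set.mem_singleton_iff, Set.mem_empty_iff_false, iff_false]
            rintro ⟨rfl, h⟩; tauto
          simp [this, hv]
    choose! nx hnx1 hnx2 using step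
    set st : ℕ → ShiftState V E := fun n => nx^[n] ⟨{a}, va, a, {a}, [(p, a, va)], []⟩ with hst
    have hst0 : st 0 = ⟨{a}, va, a, {a}, [(p, a, va)], []⟩ := rfl
    have hstS : ∀ n, st (n + 1) = nx (st n) := fun n => Function.iterate_succ_apply' nx n _
    have inv : ∀ n, ShiftInv G (G.edgeCut {p} ∩ H) U p a va L (st n) := by
      intro n
      induction n with
      | zero => exact start0
      | succ n ih => rw [hstS]; exact hnx1 _ ih
    have stp : ∀ n, ShiftStep G (st n) (st (n + 1)) := by
      intro n; rw [hstS]; exact hnx2 _ (inv n)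
    have monoF : Monotone (fun n => (st n).F) := monotone_nat_of_le_succ (fun n => (stp n).sub)
    have monoJ : Monotone (fun n => (st n).J) := monotone_nat_of_le_succ (fun n => (stp n).subJ)
    have gD : ∀ n, (st n).g ∈ G.edgeCut {p} ∩ H := fun n => (inv n).subJ (inv n).gJ
    have glt : ∀ m n, m < n → (st m).g ≠ (st n).g := by
      intro m n hmn e
      obtain ⟨n, rfl⟩ : ∃ n', n = n' + 1 := ⟨n - 1, by omega⟩
      exact (stp n).new (e ▸ monoJ (Nat.lt_succ_iff.1 hmn) (inv m).gJ)
    have ginj : ∀ m n, (st m).g = (st n).g → m = n := by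
      intro m n e
      rcases lt_trichotomy m n with h | h | h
      · exact absurd e (glt m n h)
      · exact h
      · exact absurd e.symm (glt n m h)
    have gne : ∀ n, (st (n + 1)).g ≠ a := by
      intro n
      exact fun h => (stp n).new (h ▸ (inv n).aJ)
    have hpreL : ∀ n, ∀ k ∈ es (st n).pre, k ∈ es (L (st n).g) := by
      intro n k hk; rw [(inv n).spl]; simp [hk]
    have hsufL : ∀ n, ∀ k ∈ es (st n).suf, k ∈ es (L (st n).g) := by
      intro n k hk; rw [(inv n).spl]; simp [hk]
    have hps : ∀ n, ∀ k ∈ es (st n).pre, k ∉ es (st n).suf := by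
      intro n k hk hk'
      have := hLn _ (gD n)
      rw [(inv n).spl, es_append] at this
      exact (List.nodup_append.1 this).2.2 k hk k hk' rfl
    have hFU : ∀ n, ∀ k ∈ (st (n + 1)).F \ (st n).F, k ∈ U := by
      intro n k hk
      exact ((inv (n + 1)).subF k hk.1).resolve_right (fun h => hk.2 (h ▸ (inv n).aF))
    have hFF : ∀ m n k, k ∈ (st (m + 1)).F \ (st m).F → k ∈ (st (n + 1)).F \ (st n).F → m = n := by
      intro m n k h1 h2
      rcases lt_trichotomy m n with h | h | h
      · exact absurd (monoF h h1.1) h2.2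
      · exact h
      · exact absurd (monoF h h2.1) h1.2
    have huniq : ∀ g ∈ G.edgeCut {p} ∩ H, ∀ g' ∈ G.edgeCut {p} ∩ H, ∀ k, k ∈ es (L g) → k ∈ es (L g') → g = g' := by
      intro g hg g' hg' k hk hk'
      by_contra hne
      exact hLd g hg g' hg' hne k hk hk'
    refine lk_of_weak (fun g => {k | (∃ n, g = (st n).g ∧ k ∈ (st (n + 1)).F \ (st n).F) ∨
      (∃ n, g = (st n).g ∧ k ∈ es (st n).pre) ∨ (∃ n, g = (st n).g ∧ k ∈ es (st (n + 1)).suf) ∨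
      ((∀ n, g ≠ (st n).g) ∧ k ∈ es (L g))}) ?_ ?_
    · intro g hg
      refine ⟨?_, ?_, ?_⟩
      · by_cases hex : ∃ n, g = (st n).g
        · obtain ⟨n, hn⟩ := hex
          right; left
          refine ⟨n, hn, ?_⟩
          obtain ⟨d, l', e1, e2, e3, e4⟩ := (inv n).wpre.first_cut (inv n).zp
          have := hLcut _ (gD n) _ (hpreL n _ e4) e3
          rw [this, ← hn] at e4
          exact e4
        · push Not at hex
          right; right; right; exact ⟨hex, hLg g hg⟩
      · rintro k (⟨n, _, hk⟩ | ⟨n, _, hk⟩ | ⟨n, _, hk⟩ | ⟨_, hk⟩)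
        · exact (hFU n k hk).1
        · exact hLH _ (gD n) k (hpreL n k hk)
        · exact hLH _ (gD _) k (hsufL _ k hk)
        · exact hLH g hg k hk
      · by_cases hex : ∃ n, g = (st n).g
        · obtain ⟨n, hn⟩ := hex
          obtain ⟨q, hq, hq'⟩ := hLw _ (gD (n + 1))
          obtain ⟨hqT, hqp⟩ := hq' (gne n)
          refine ⟨q, hqT, hqp, ?_⟩
          have c1 := (inv n).wpre.con (C := {k | k ∈ es (st n).pre}) (fun k hk => hk)
          have c2 := (stp n).con
          have c3 : Con G {k | k ∈ es (st (n + 1)).suf} (st (n + 1)).z q := by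
            rw [(inv (n + 1)).spl] at hq
            obtain ⟨c, w1, w2⟩ := wk_append.1 hq
            have : c = (st (n + 1)).z := by
              have v1 := wk_verts w1
              have v2 := wk_verts (inv (n + 1)).wpre
              have := v1.trans v2.symm
              simpa using this
            rw [← this]
            exact w2.con (fun k hk => hk)
          refine (c1.mono ?_).trans ((c2.mono ?_).trans (c3.mono ?_))
          · intro k hk; right; left; exact ⟨n, hn, hk⟩
          · intro k hk; left; exact ⟨n, hn, hk⟩
          · intro k hk; right; right; left; exact ⟨n, hn, hk⟩
        · push Not at hex
          have hga : g ≠ a := hex 0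
          obtain ⟨q, hq, hq'⟩ := hLw g hg
          refine ⟨q, (hq' hga).1, (hq' hga).2, hq.con (fun k hk => ?_)⟩
          right; right; right; exact ⟨hex, hk⟩
    · have hUL : ∀ n k, k ∈ (st (n + 1)).F \ (st n).F → ∀ g ∈ G.edgeCut {p} ∩ H, k ∉ es (L g) :=
        fun n k hk => (hFU n k hk).2
      rintro g hg g' hg' hne k (⟨n, e, hk⟩ | ⟨n, e, hk⟩ | ⟨n, e, hk⟩ | ⟨e, hk⟩)
        (⟨m, e', hk'⟩ | ⟨m, e', hk'⟩ | ⟨m, e', hk'⟩ | ⟨e', hk'⟩)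
      · exact hne (by rw [e, e', hFF n m k hk hk'])
      · exact hUL n k hk _ (gD m) (hpreL m k hk')
      · exact hUL n k hk _ (gD _) (hsufL _ k hk')
      · exact hUL n k hk _ hg' hk'
      · exact hUL m k hk' _ (gD n) (hpreL n k hk)
      · exact hne (by rw [e, e', huniq _ (gD n) _ (gD m) k (hpreL n k hk) (hpreL m k hk')])
      · have := ginj _ _ (huniq _ (gD n) _ (gD _) k (hpreL n k hk) (hsufL _ k hk'))
        subst this
        exact hps _ k hk hk'
      · exact hne (by rw [e, huniq _ (gD n) _ hg' k (hpreL n k hk) hk'])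
      · exact hUL m k hk' _ (gD _) (hsufL _ k hk)
      · have := ginj _ _ (huniq _ (gD m) _ (gD _) k (hpreL m k hk') (hsufL _ k hk))
        subst this
        exact hps _ k hk' hk
      · have := ginj _ _ (huniq _ (gD _) _ (gD _) k (hsufL _ k hk) (hsufL _ k hk'))
        have : n = m := by omega
        exact hne (by rw [e, e', this])
      · exact e' _ (huniq _ (gD _) _ hg' k (hsufL _ k hk) hk').symm
      · exact hUL m k hk' _ hg hk
      · exact hne (by rw [e', huniq _ (gD m) _ hg k (hpreL m k hk') hk])
      · exact e _ (huniq _ (gD _) _ hg k (hsufL _ k hk') hk).symm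
      · exact hne (huniq _ hg _ hg' k hk hk')

theorem wk_end {l : List (V × E × V)} {a b c : V} (h : Wk G a l b) (h' : Wk G a l c) : b = c := by
  have := (wk_verts h).trans (wk_verts h').symm
  simpa using this

/-- invariant for augmentation -/
structure AugInv (G : Grapht V E) (H : Set E) (u : V) (S : E → List (V × E × V))
    (τ : List (V × E × V)) (a : E) (z : V) : Prop where
  aD : a ∈ G.edgeCut {u} ∩ H
  sys : PSys G H u ((G.edgeCut {u} ∩ H) \ {a}) S
  head : ∃ v l, τ = (u, a, v) :: l
  wk : Wk G u τ z
  nd : (es τ).Nodup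
  sub : ∀ k ∈ es τ, k ∈ H
  dis : ∀ g ∈ (G.edgeCut {u} ∩ H) \ {a}, ∀ k ∈ es τ, k ∉ es (S g)

theorem aug_list {H : Set E} {u q : V} (hq : q ∈ G.T) (hqu : q ≠ u) (m : List (V × E × V)) :
    ∀ (S : E → List (V × E × V)) (τ : List (V × E × V)) (a : E) (z : V), AugInv G H u S τ a z →
    Wk G z m q → m.Nodup →
    (∀ d ∈ m, d.2.1 ∈ H ∧ d.2.2 ≠ u ∧ d ∉ τ ∧ ∀ g ∈ (G.edgeCut {u} ∩ H) \ {a}, d ∉ S g) →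
    LK G H u := by
  classical
  induction m with
  | nil =>
    intro S τ a z hi hw _ _
    simp at hw; subst hw
    have ea : Function.update S a τ a = τ := by simp
    have en : ∀ g, g ≠ a → Function.update S a τ g = S g := fun g hg => by simp [hg]
    refine psys_lk (S := Function.update S a τ) ⟨?_, ?_⟩
    · intro g hg
      by_cases hga : g = a
      · subst hga
        rw [ea]
        obtain ⟨v, l, hh⟩ := hi.head
        exact ⟨v, l, z, hh, hi.wk, hq, hqu, hi.nd, hi.sub⟩
      · rw [en g hga]; exact hi.sys.1 g ⟨hg, hga⟩
    · intro g hg g' hg' hne k hk hk'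
      by_cases hga : g = a
      · subst hga
        rw [ea] at hk
        rw [en g' hne.symm] at hk'
        exact hi.dis g' ⟨hg', hne.symm⟩ k hk hk'
      · rw [en g hga] at hk
        by_cases hga' : g' = a
        · subst hga'
          rw [ea] at hk'
          exact hi.dis g ⟨hg, hga⟩ k hk' hk
        · rw [en g' hga'] at hk'
          exact hi.sys.2 g ⟨hg, hga⟩ g' ⟨hg', hga'⟩ hne k hk hk'
  | cons d m ih =>
    intro S τ a z hi hw hn hall
    obtain ⟨z0, k, z1⟩ := d
    obtain ⟨h1, h2, h3⟩ := hw
    simp only at h1 h2 h3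
    subst h1
    obtain ⟨hkH, hz1, hdτ, hdS⟩ := hall (z0, k, z1) (by simp)
    simp only at hkH hz1
    have hn' := List.nodup_cons.1 hn
    by_cases hkτ : k ∈ es τ
    · obtain ⟨x, y, hxy⟩ := mem_es.1 hkτ
      have hI := wk_inc hi.wk _ hxy
      simp only [h2, Sym2.eq_iff] at hI
      rcases hI with ⟨rfl, rfl⟩ | ⟨rfl, rfl⟩
      · exact absurd hxy hdτ
      · obtain ⟨l1, l2, hl⟩ := List.append_of_mem hxy
        have hw := hi.wk
        rw [hl] at hw
        obtain ⟨c, w1, w2⟩ := wk_append.1 hw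
        have hc : z1 = c := w2.1
        subst hc
        refine ih S l1 a z1 ⟨hi.aD, hi.sys, ?_, w1, ?_, ?_, ?_⟩ h3 hn'.2 ?_
        · obtain ⟨v, l, hh⟩ := hi.head
          cases l1 with
          | nil => simp at w1; exact absurd w1.symm hz1
          | cons d l1 =>
            rw [hl] at hh
            simp only [List.cons_append, List.cons.injEq] at hh
            exact ⟨v, l1, by rw [hh.1]⟩
        · have := hi.nd
          rw [hl, es_append] at this
          exact (List.nodup_append.1 this).1
        · intro k hk; exact hi.sub k (by rw [hl]; simp [hk])
        · intro g hg k hk; exact hi.dis g hg k (by rw [hl]; simp [hk])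
        · intro d hd
          obtain ⟨b1, b2, b3, b4⟩ := hall d (by simp [hd])
          exact ⟨b1, b2, fun h => b3 (by rw [hl]; simp [h]), b4⟩
    · by_cases hkS : ∃ g ∈ (G.edgeCut {u} ∩ H) \ {a}, k ∈ es (S g)
      · obtain ⟨g, hg, hkg⟩ := hkS
        obtain ⟨v, l, q', hS1, hS2, hS3, hS4, hS5, hS6⟩ := hi.sys.1 g hg
        obtain ⟨x, y, hxy⟩ := mem_es.1 hkg
        have hI := wk_inc hS2 _ hxy
        simp only [h2, Sym2.eq_iff] at hI
        rcases hI with ⟨rfl, rfl⟩ | ⟨rfl, rfl⟩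
        · exact absurd hxy (hdS g hg)
        · obtain ⟨l1, l2, hl⟩ := List.append_of_mem hxy
          rw [hl] at hS2
          obtain ⟨c, w1, w2⟩ := wk_append.1 hS2
          have hc : z1 = c := w2.1
          subst hc
          have w3 : Wk G z0 l2 q' := w2.2.2
          have ea : Function.update S a (τ ++ l2) a = τ ++ l2 := by simp
          have en : ∀ g, g ≠ a → Function.update S a (τ ++ l2) g = S g := fun g hg => by simp [hg]
          have s1 : ∀ k ∈ es l1, k ∈ es (S g) := by intro k hk; rw [hl]; simp [hk]
          have s2 : ∀ k ∈ es l2, k ∈ es (S g) := by intro k hk; rw [hl]; simp [hk]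
          rw [hl, es_append, es_cons] at hS5
          have n1 := List.nodup_append.1 hS5
          have n2 := List.nodup_cons.1 n1.2.1
          have hag : a ≠ g := fun h => hg.2 h.symm
          refine ih (Function.update S a (τ ++ l2)) l1 g z1 ⟨hg.1, ⟨?_, ?_⟩, ?_, w1, n1.1, ?_, ?_⟩ h3 hn'.2 ?_
          · intro h hh
            by_cases hha : h = a
            · subst hha
              rw [ea]
              obtain ⟨v', l', hh'⟩ := hi.head
              refine ⟨v', l' ++ l2, q', by rw [hh']; rfl, wk_append.2 ⟨_, hi.wk, w3⟩, hS3, hS4, ?_, ?_⟩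
              · rw [es_append]
                refine List.nodup_append.2 ⟨hi.nd, n2.2, ?_⟩
                intro k hk k' hk' e
                subst e
                exact hi.dis g hg k hk (s2 k hk')
              · intro k hk
                rw [es_append, List.mem_append] at hk
                rcases hk with hk | hk
                · exact hi.sub k hk
                · exact hS6 k (s2 k hk)
            · rw [en h hha]; exact hi.sys.1 h ⟨hh.1, hha⟩
          · have aux : ∀ h ∈ (G.edgeCut {u} ∩ H) \ {g}, h ≠ a → ∀ k ∈ es (τ ++ l2), k ∉ es (S h) := by
              intro h hh hha k hk hk'
              rw [es_append, List.mem_append] at hk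
              rcases hk with hk | hk
              · exact hi.dis h ⟨hh.1, hha⟩ k hk hk'
              · exact hi.sys.2 h ⟨hh.1, hha⟩ g hg hh.2 k hk' (s2 k hk)
            intro h hh h' hh' hne k hk hk'
            by_cases hha : h = a
            · subst hha
              rw [ea] at hk
              rw [en h' hne.symm] at hk'
              exact aux h' hh' hne.symm k hk hk'
            · rw [en h hha] at hk
              by_cases hha' : h' = a
              · subst hha'
                rw [ea] at hk'
                exact aux h hh hha k hk' hk
              · rw [en h' hha'] at hk'
                exact hi.sys.2 h ⟨hh.1, hha⟩ h' ⟨hh'.1, hha'⟩ hne k hk hk'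
          · cases l1 with
            | nil => simp at w1; exact absurd w1.symm hz1
            | cons d l1 =>
              rw [hl] at hS1
              simp only [List.cons_append, List.cons.injEq] at hS1
              exact ⟨v, l1, by rw [hS1.1]⟩
          · intro k hk; exact hS6 k (s1 k hk)
          · intro h hh k' hk hk'
            by_cases hha : h = a
            · subst hha
              rw [ea, es_append, List.mem_append] at hk'
              rcases hk' with hk' | hk'
              · exact hi.dis g hg k' hk' (s1 k' hk)
              · exact n1.2.2 k' hk k' (by simp [hk']) rfl
            · rw [en h hha] at hk'
              exact hi.sys.2 h ⟨hh.1, hha⟩ g hg hh.2 k' hk' (s1 k' hk)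
          · intro d hd
            obtain ⟨b1, b2, b3, b4⟩ := hall d (by simp [hd])
            refine ⟨b1, b2, fun h => b4 g hg (by rw [hl]; simp [h]), ?_⟩
            intro h hh hdh
            by_cases hha : h = a
            · subst hha
              rw [ea, List.mem_append] at hdh
              rcases hdh with hdh | hdh
              · exact b3 hdh
              · exact b4 g hg (by rw [hl]; simp [hdh])
            · rw [en h hha] at hdh
              exact b4 h ⟨hh.1, hha⟩ hdh
      · push Not at hkS
        refine ih S (τ ++ [(z0, k, z1)]) a z1 ⟨hi.aD, hi.sys, ?_, ?_, ?_, ?_, ?_⟩ h3 hn'.2 ?_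
        · obtain ⟨v, l, hh⟩ := hi.head
          exact ⟨v, l ++ [(z0, k, z1)], by rw [hh]; rfl⟩
        · exact wk_append.2 ⟨_, hi.wk, rfl, h2, rfl⟩
        · rw [es_append]
          refine List.nodup_append.2 ⟨hi.nd, by simp, ?_⟩
          intro x hx y hy e
          simp at hy
          subst hy; subst e
          exact hkτ hx
        · intro x hx
          simp at hx
          rcases hx with hx | rfl
          · exact hi.sub x hx
          · exact hkH
        · intro g hg x hx
          simp at hx
          rcases hx with hx | rfl
          · exact hi.dis g hg x hx
          · exact hkS g hg
        · intro d hd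
          obtain ⟨b1, b2, b3, b4⟩ := hall d (by simp [hd])
          refine ⟨b1, b2, fun h => ?_, b4⟩
          simp at h
          rcases h with h | rfl
          · exact b3 h
          · exact hn'.1 hd

theorem aug_X {H : Set E} {u : V} {a : E} {S : E → List (V × E × V)}
    (ha : a ∈ G.edgeCut {u} ∩ H) (hS : PSys G H u ((G.edgeCut {u} ∩ H) \ {a}) S)
    (haS : ∀ g ∈ (G.edgeCut {u} ∩ H) \ {a}, a ∉ es (S g)) (hno : ¬ LK G H u) :
    ∃ X : Set V, u ∈ X ∧ (∀ x ∈ X, x ∈ G.T → x = u) ∧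
      ∀ k ∈ H, ∀ x y, G.I k = s(x, y) → x ∈ X → y ∉ X →
        ∃ g ∈ (G.edgeCut {u} ∩ H) \ {a}, (x, k, y) ∈ S g := by
  have hva : ∃ va, G.I a = s(u, va) := by
    obtain ⟨x, y, hI, hx, _⟩ := ha.1
    simp at hx; subst hx; exact ⟨y, hI⟩
  obtain ⟨va, hva⟩ := hva
  have hvau : va ≠ u := (I_ne hva).symm
  set R : V → E → V → Prop := fun x k y => k ∈ H ∧ y ≠ u ∧ (x, k, y) ∉ [(u, a, va)] ∧
    ∀ g ∈ (G.edgeCut {u} ∩ H) \ {a}, (x, k, y) ∉ S g with hR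
  set rch : V → Prop := fun y => Relation.ReflTransGen (fun x y => ∃ g, G.I g = s(x, y) ∧ R x g y) va y with hrch
  have hrne : ∀ y, rch y → y ≠ u := by
    intro y hy
    rcases Relation.ReflTransGen.cases_tail hy with rfl | ⟨c, _, g, _, hg⟩
    · exact hvau
    · exact hg.2.1
  refine ⟨{x | x = u ∨ rch x}, Or.inl rfl, ?_, ?_⟩
  · rintro x (hx | hx) hxT
    · exact hx
    · exfalso
      obtain ⟨l, h1, h2, h3⟩ := exists_path hx
      have hln : l.Nodup := by
        have := (List.nodup_append.1 h2).1
        exact List.Nodup.of_map _ this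
      exact hno (aug_list hxT (hrne x hx) l S [(u, a, va)] a va
        ⟨ha, hS, ⟨va, [], rfl⟩, ⟨rfl, hva, rfl⟩, by simp, by simpa using ha.2, by simpa using haS⟩ h1 hln h3)
  · intro k hk x y hI hx hy
    have hy1 : y ≠ u := fun h => hy (Or.inl h)
    have hy2 : ¬ rch y := fun h => hy (Or.inr h)
    have hyva : y ≠ va := fun h => hy2 (h ▸ Relation.ReflTransGen.refl)
    rcases hx with rfl | hx
    · have hkD : k ∈ G.edgeCut {x} ∩ H := ⟨(mem_cut_single hI).2 (Or.inl rfl), hk⟩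
      have hka : k ≠ a := by
        rintro rfl
        rw [hI, Sym2.eq_iff] at hva
        rcases hva with ⟨_, h⟩ | ⟨h, _⟩
        · exact hyva h
        · exact hvau h.symm
      refine ⟨k, ⟨hkD, hka⟩, ?_⟩
      obtain ⟨v, l, q, e, hw, _⟩ := hS.1 k ⟨hkD, hka⟩
      rw [e] at hw ⊢
      have hI' : G.I k = s(x, v) := hw.2.1
      rw [hI, Sym2.eq_iff] at hI'
      rcases hI' with ⟨_, h⟩ | ⟨_, h⟩
      · rw [h]; simp
      · exact absurd h hy1
    · by_contra hcon
      push Not at hcon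
      apply hy2
      refine Relation.ReflTransGen.tail hx ⟨k, hI, hk, hy1, ?_, hcon⟩
      simp; intro _ _ h; exact hyva h

theorem Sys.restr {H H' : Set E} {p : V} {D D' : Set E} {C : E → Set E} (h : Sys G H p D C)
    (hD : D' ⊆ D) (hH : H ⊆ H') : Sys G H' p D' C :=
  ⟨fun g hg => ⟨(h.1 g (hD hg)).1, (h.1 g (hD hg)).2.1.trans hH, (h.1 g (hD hg)).2.2⟩,
    fun g hg g' hg' => h.2 g (hD hg) g' (hD hg')⟩

/-- walks without entering darts stay inside before an inside vertex -/
theorem stay_in {X : Set V} {l : List (V × E × V)} : ∀ {a x : V}, Wk G a l x → x ∈ X →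
    (∀ d ∈ l, d.2.2 ∈ X → d.1 ∈ X) → ∀ v ∈ vs l, v ∈ X := by
  induction l with
  | nil => simp
  | cons d l ih =>
    intro a x hw hx hno v hv
    have ihl := ih hw.2.2 hx (fun d' hd' => hno d' (by simp [hd']))
    have h2 : d.2.2 ∈ X := by
      have hw2 := hw.2.2
      cases l with
      | nil => simp at hw2; rw [hw2]; exact hx
      | cons d' l => rw [← hw2.1]; exact ihl _ (by simp)
    rcases List.mem_cons.1 hv with rfl | hv
    · exact hno d (by simp) h2
    · exact ihl v hv

/-- walks without leaving darts stay inside -/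
theorem stay_fwd {X : Set V} {l : List (V × E × V)} : ∀ {a x : V}, Wk G a l x → a ∈ X →
    (∀ d ∈ l, d.1 ∈ X → d.2.2 ∈ X) → (∀ v ∈ vs l, v ∈ X) ∧ x ∈ X := by
  induction l with
  | nil => intro a x h ha _; simp at h; subst h; simp [ha]
  | cons d l ih =>
    intro a x hw ha hno
    have hd : d.1 ∈ X := by rw [hw.1]; exact ha
    have := ih hw.2.2 (hno d (by simp) hd) (fun d' hd' => hno d' (by simp [hd']))
    refine ⟨?_, this.2⟩
    intro v hv
    rcases List.mem_cons.1 hv with rfl | hv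
    · exact hd
    · exact this.1 v hv

/-- first entrance into a set -/
theorem first_entry {X : Set V} {l : List (V × E × V)} : ∀ {a b : V}, Wk G a l b → a ∉ X →
    ((∀ v ∈ vs l, v ∉ X) ∧ b ∉ X) ∨ ∃ m1 d m2, l = m1 ++ d :: m2 ∧ (∀ v ∈ vs m1, v ∉ X) ∧ d.1 ∉ X ∧ d.2.2 ∈ X := by
  induction l with
  | nil => intro a b h ha; simp at h; subst h; left; simp [ha]
  | cons d l ih =>
    intro a b hw ha
    have hd : d.1 ∉ X := by rw [hw.1]; exact ha
    by_cases h2 : d.2.2 ∈ X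
    · right; exact ⟨[], d, l, rfl, by simp, hd, h2⟩
    · rcases ih hw.2.2 h2 with h | ⟨m1, d', m2, e, h3, h4, h5⟩
      · left
        refine ⟨?_, h.2⟩
        intro v hv
        rcases List.mem_cons.1 hv with rfl | hv
        · exact hd
        · exact h.1 v hv
      · right
        refine ⟨d :: m1, d', m2, by rw [e]; rfl, ?_, h4, h5⟩
        intro v hv
        rcases List.mem_cons.1 hv with rfl | hv
        · exact hd
        · exact h3 v hv

theorem split_cmp {α : Type*} {d d' : α} : ∀ {l1 l2 l1' l2' : List α}, l1 ++ d :: l2 = l1' ++ d' :: l2' →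
    d = d' ∨ d ∈ l1' ∨ d' ∈ l1 := by
  intro l1
  induction l1 with
  | nil =>
    intro l2 l1' l2' h
    cases l1' with
    | nil => simp at h; left; exact h.1
    | cons x l1' => simp at h; right; left; simp [h.1]
  | cons y l1 ih =>
    intro l2 l1' l2' h
    cases l1' with
    | nil => simp at h; right; right; simp [h.1]
    | cons x l1' =>
      simp at h
      rcases ih h.2 with h | h | h
      · left; exact h
      · right; left; simp [h]
      · right; right; simp [h]

/-- the blocking set and its fans -/
theorem drop_X {H : Set E} {u : V} {f : E} (hL : LK G H u) (hfH : f ∈ H)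
    (hno : ¬ LK G (H \ {f}) u) :
    ∃ (X : Set V) (Z : E → Set E), u ∈ X ∧ (∀ x ∈ X, x ∈ G.T → x = u) ∧ f ∈ G.edgeCut X ∩ H ∧
      (∀ h ∈ G.edgeCut X ∩ H, h ∈ Z h ∧ Z h ⊆ H ∧
        (∀ k ∈ Z h, k ≠ h → ∀ x y, G.I k = s(x, y) → x ∈ X ∧ y ∈ X) ∧
        ∀ x y, G.I h = s(x, y) → Con G (Z h) u x) ∧
      (∀ h ∈ G.edgeCut X ∩ H, ∀ h' ∈ G.edgeCut X ∩ H, h ≠ h' → ∀ k ∈ Z h, k ∉ Z h') ∧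
      ∃ a C, Sys G (H \ Z f) u ((G.edgeCut {u} ∩ H) \ {a}) C := by
  obtain ⟨S, hS⟩ := lk_psys hL
  have hex : ∃ g0 ∈ G.edgeCut {u} ∩ H, g0 ≠ f ∧ f ∈ es (S g0) := by
    by_contra hcon
    push Not at hcon
    apply hno
    refine psys_lk (S := S) ⟨?_, ?_⟩
    · intro g hg
      obtain ⟨v, l, q, h1, h2, h3, h4, h5, h6⟩ := hS.1 g ⟨hg.1, hg.2.1⟩
      refine ⟨v, l, q, h1, h2, h3, h4, h5, fun k hk => ⟨h6 k hk, ?_⟩⟩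
      rintro rfl
      exact hcon g ⟨hg.1, hg.2.1⟩ hg.2.2 hk
    · intro g hg g' hg'
      exact hS.2 g ⟨hg.1, hg.2.1⟩ g' ⟨hg'.1, hg'.2.1⟩
  obtain ⟨g0, hg0, hg0f, hf0⟩ := hex
  have hfu : f ∉ G.edgeCut {u} := fun h => hg0f (psys_cut hS hg0 hf0 h).symm
  have hD : G.edgeCut {u} ∩ (H \ {f}) = G.edgeCut {u} ∩ H := by
    ext k
    constructor
    · rintro ⟨h1, h2⟩; exact ⟨h1, h2.1⟩
    · rintro ⟨h1, h2⟩; exact ⟨h1, h2, fun h => hfu (h ▸ h1)⟩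
  have hfS : ∀ g ∈ (G.edgeCut {u} ∩ H) \ {g0}, f ∉ es (S g) := fun g hg h =>
    hS.2 g hg.1 g0 hg0 hg.2 f h hf0
  have hX := aug_X (G := G) (H := H \ {f}) (u := u) (a := g0) (S := S) (by rw [hD]; exact hg0)
    (by
      rw [hD]
      refine ⟨?_, ?_⟩
      · intro g hg
        obtain ⟨v, l, q, h1, h2, h3, h4, h5, h6⟩ := hS.1 g hg.1
        refine ⟨v, l, q, h1, h2, h3, h4, h5, fun k hk => ⟨h6 k hk, ?_⟩⟩
        rintro rfl
        exact hfS g hg hk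
      · intro g hg g' hg'
        exact hS.2 g hg.1 g' hg'.1)
    (by
      rw [hD]
      intro g hg h
      exact hS.2 g hg.1 g0 hg0 hg.2 g0 h (hS.1 g0 hg0).mem) hno
  rw [hD] at hX
  obtain ⟨X, huX, hXT, hXc⟩ := hX
  have huniq : ∀ g ∈ G.edgeCut {u} ∩ H, ∀ g' ∈ G.edgeCut {u} ∩ H, ∀ k, k ∈ es (S g) → k ∈ es (S g') → g = g' := by
    intro g hg g' hg' k hk hk'
    by_contra hne
    exact hS.2 g hg g' hg' hne k hk hk'
  have dec : ∀ h ∈ G.edgeCut X ∩ H, ∃ g ∈ G.edgeCut {u} ∩ H, ∃ x y l1 l2, S g = l1 ++ (x, h, y) :: l2 ∧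
      x ∈ X ∧ y ∉ X ∧ ∀ v ∈ vs l1, v ∈ X := by
    intro h hh
    by_cases hhf : h = f
    · subst hhf
      obtain ⟨v, l, q, h1, h2, h3, h4, h5, h6⟩ := hS.1 g0 hg0
      obtain ⟨x, y, hxy⟩ := mem_es.1 hf0
      obtain ⟨l1, l2, hl⟩ := List.append_of_mem hxy
      rw [hl] at h2
      obtain ⟨c, w1, w2⟩ := wk_append.1 h2
      have hc : x = c := w2.1
      subst hc
      rw [hl, es_append, es_cons] at h5
      have n1 := List.nodup_append.1 h5
      have n2 := List.nodup_cons.1 n1.2.1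
      have nocross : ∀ d ∈ S g0, d.2.1 ≠ h → d.1 ∈ X → d.2.2 ∈ X := by
        intro d hd hdf hd1
        by_contra hd2
        have hdes : d.2.1 ∈ es (S g0) := mem_es.2 ⟨d.1, d.2.2, hd⟩
        have hin : G.I d.2.1 = s(d.1, d.2.2) := by
          apply wk_inc h2; rw [← hl]; exact hd
        obtain ⟨g, hg, hgd⟩ := hXc d.2.1 ⟨h6 _ hdes, hdf⟩ d.1 d.2.2 hin hd1 hd2
        exact hg.2 (huniq g hg.1 g0 hg0 d.2.1 (mem_es.2 ⟨_, _, hgd⟩) hdes)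
      obtain ⟨s1, s2⟩ := stay_fwd w1 huX (fun d hd => nocross d (by rw [hl]; simp [hd]) (by
        intro e
        exact n1.2.2 h (mem_es.2 ⟨d.1, d.2.2, by rw [← e]; exact hd⟩) h (by simp) rfl))
      refine ⟨g0, hg0, x, y, l1, l2, hl, s2, ?_, s1⟩
      intro hy
      obtain ⟨_, s4⟩ := stay_fwd w2.2.2 hy (fun d hd => nocross d (by rw [hl]; simp [hd]) (by
        intro e
        exact n2.1 (mem_es.2 ⟨d.1, d.2.2, by rw [← e]; exact hd⟩)))
      exact h4 (hXT q s4 h3)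
    · obtain ⟨⟨x, y, hI, hx, hy⟩, hH⟩ := hh
      obtain ⟨g, hg, hgd⟩ := hXc h ⟨hH, hhf⟩ x y hI hx hy
      obtain ⟨l1, l2, hl⟩ := List.append_of_mem hgd
      refine ⟨g, hg.1, x, y, l1, l2, hl, hx, hy, ?_⟩
      obtain ⟨v, l, q, h1, h2, h3, h4, h5, h6⟩ := hS.1 g hg.1
      have h2' := h2
      rw [hl] at h2
      obtain ⟨c, w1, w2⟩ := wk_append.1 h2
      have hc : x = c := w2.1
      subst hc
      refine stay_in w1 hx ?_
      intro d hd hd2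
      by_contra hd1
      have hdS : d ∈ S g := by rw [hl]; simp [hd]
      have hdes : d.2.1 ∈ es (S g) := mem_es.2 ⟨d.1, d.2.2, hdS⟩
      have hdf : d.2.1 ≠ f := fun e => hfS g hg (e ▸ hdes)
      have hin : G.I d.2.1 = s(d.1, d.2.2) := wk_inc h2' _ hdS
      obtain ⟨g', hg', hgd'⟩ := hXc d.2.1 ⟨h6 _ hdes, hdf⟩ d.2.2 d.1 (hin.trans Sym2.eq_swap) hd2 hd1
      have := huniq g' hg'.1 g hg.1 d.2.1 (mem_es.2 ⟨_, _, hgd'⟩) hdes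
      subst this
      have heq : d = (d.2.2, d.2.1, d.1) := List.inj_on_of_nodup_map h5 hdS hgd' rfl
      have : d.1 = d.2.2 := congrArg Prod.fst heq
      exact hd1 (this ▸ hd2)
  have : Nonempty V := ⟨u⟩
  choose! gg hgg xx yy ll1 ll2 hsp hxx hyy hvv using dec
  have hwk : ∀ h ∈ G.edgeCut X ∩ H, Wk G u (ll1 h) (xx h) ∧ G.I h = s(xx h, yy h) := by
    intro h hh
    obtain ⟨v, l, q, h1, h2, h3, h4, h5, h6⟩ := hS.1 _ (hgg h hh)
    rw [hsp h hh] at h2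
    obtain ⟨c, w1, w2⟩ := wk_append.1 h2
    have hc : xx h = c := w2.1
    rw [← hc] at w1
    exact ⟨w1, w2.2.1⟩
  have hZS : ∀ h ∈ G.edgeCut X ∩ H, ∀ k, k ∈ es (ll1 h) ∨ k = h → k ∈ es (S (gg h)) := by
    rintro h hh k (hk | hk)
    · rw [hsp h hh]; simp [hk]
    · rw [hsp h hh]; simp [hk]
  have htX : ∀ h ∈ G.edgeCut X ∩ H, ∀ d ∈ ll1 h, d.1 ∈ X ∧ d.2.2 ∈ X := by
    intro h hh d hd
    have := wk_mem_verts (hwk h hh).1 hd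
    refine ⟨hvv h hh _ this.1, ?_⟩
    rcases List.mem_append.1 this.2.2.2 with h' | h'
    · exact hvv h hh _ h'
    · simp at h'; rw [h']; exact hxx h hh
  have hfX : f ∈ G.edgeCut X ∩ H := by
    refine ⟨?_, hfH⟩
    by_contra hfX
    obtain ⟨v, l, q, h1, h2, h3, h4, h5, h6⟩ := hS.1 g0 hg0
    obtain ⟨_, s2⟩ := stay_fwd h2 huX (by
      intro d hd hd1
      by_contra hd2
      have hdes : d.2.1 ∈ es (S g0) := mem_es.2 ⟨d.1, d.2.2, hd⟩
      have hin : G.I d.2.1 = s(d.1, d.2.2) := wk_inc h2 _ hd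
      have hdf : d.2.1 ≠ f := by
        intro e
        rw [← e] at hfX
        exact hfX ⟨_, _, hin, hd1, hd2⟩
      obtain ⟨g, hg, hgd⟩ := hXc d.2.1 ⟨h6 _ hdes, hdf⟩ d.1 d.2.2 hin hd1 hd2
      exact hg.2 (huniq g hg.1 g0 hg0 d.2.1 (mem_es.2 ⟨_, _, hgd⟩) hdes))
    exact h4 (hXT q s2 h3)
  refine ⟨X, fun h => {k | k ∈ es (ll1 h) ∨ k = h}, huX, hXT, hfX, ?_, ?_, gg f, fun g => {k | k ∈ es (S g)}, ?_⟩
  · intro h hh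
    refine ⟨Or.inr rfl, fun k hk => (hS.1 _ (hgg h hh)).sub k (hZS h hh k hk), ?_, ?_⟩
    · rintro k (hk | hk) hne x y hI
      · obtain ⟨x', y', hd⟩ := mem_es.1 hk
        have hI' := wk_inc (hwk h hh).1 _ hd
        have hX' := htX h hh _ hd
        simp only [hI, Sym2.eq_iff] at hI' hX'
        rcases hI' with ⟨rfl, rfl⟩ | ⟨rfl, rfl⟩
        · exact hX'
        · exact hX'.symm
      · exact absurd hk hne
    · intro x y hI
      have c1 : Con G {k | k ∈ es (ll1 h) ∨ k = h} u (xx h) := (hwk h hh).1.con (fun k hk => Or.inl hk)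
      have hI' := (hwk h hh).2
      have hI2 := hI'
      rw [hI, Sym2.eq_iff] at hI'
      rcases hI' with ⟨rfl, rfl⟩ | ⟨rfl, rfl⟩
      · exact c1
      · exact c1.trans (Con.single (Or.inr rfl) hI2)
  · intro h hh h' hh' hne k hk hk'
    have e := huniq _ (hgg h hh) _ (hgg h' hh') k (hZS h hh k hk) (hZS h' hh' k hk')
    have s1 := hsp h hh
    rw [e, hsp h' hh'] at s1
    rcases split_cmp s1 with h1 | h1 | h1
    · simp at h1; exact hne h1.2.1.symm
    · exact hyy h' hh' (htX h hh _ h1).2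
    · exact hyy h hh (htX h' hh' _ h1).2
  · refine ⟨?_, fun g hg g' hg' => hS.2 g hg.1 g' hg'.1⟩
    intro g hg
    refine ⟨(hS.1 g hg.1).mem, ?_, fun k hk hkp => psys_cut hS hg.1 hk hkp, (hS.1 g hg.1).con⟩
    intro k hk
    refine ⟨(hS.1 g hg.1).sub k hk, fun hkZ => ?_⟩
    exact hg.2 (huniq _ hg.1 _ (hgg f hfX) k hk (hZS f hfX k hkZ))

theorem drop_edge {H : Set E} {u : V} {f : E} (hL : ∀ p ∈ G.T, LK G H p) (hu : u ∈ G.T) (hfH : f ∈ H)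
    (hno : ¬ LK G (H \ {f}) u) :
    ∃ Zf : Set E, f ∈ Zf ∧ (∀ k ∈ Zf, k ≠ f → ∀ p ∈ G.T, k ∈ G.edgeCut {p} → p = u) ∧
      (∀ x y, G.I f = s(x, y) → Con G Zf u x) ∧
      ∀ p ∈ G.T, ∃ a C, Sys G (H \ Zf) p ((G.edgeCut {p} ∩ H) \ {a}) C := by
  obtain ⟨X, Z, huX, hXT, hfX, hZ, hZd, a, C, hsys⟩ := drop_X (hL u hu) hfH hno
  refine ⟨Z f, (hZ f hfX).1, ?_, (hZ f hfX).2.2.2, ?_⟩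
  · intro k hk hkf p hp hkp
    obtain ⟨x, y, hI⟩ := exists_ends G k
    have := (hZ f hfX).2.2.1 k hk hkf x y hI
    rcases (mem_cut_single hI).1 hkp with rfl | rfl
    · exact hXT _ this.1 hp
    · exact hXT _ this.2 hp
  intro p hp
  by_cases hpu : p = u
  · subst hpu; exact ⟨a, C, hsys⟩
  have hpX : p ∉ X := fun h => hpu (hXT p h hp)
  obtain ⟨S, hS⟩ := lk_psys (hL p hp)
  set bi : E → Prop := fun k => ∀ x y, G.I k = s(x, y) → x ∈ X ∧ y ∈ X with hbi
  have hnbi : ∀ h ∈ G.edgeCut X, ¬ bi h := by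
    rintro h ⟨x, y, hI, hx, hy⟩ hb
    exact hy (hb x y hI).2
  have key : ∀ g, ∃ C : Set E, g ∈ G.edgeCut {p} ∩ H → g ∈ C ∧ (∃ q ∈ G.T, q ≠ p ∧ Con G C p q) ∧
      ∀ k ∈ C, (k ∈ es (S g) ∧ ¬ bi k) ∨ ∃ h ∈ G.edgeCut X ∩ H, h ∈ es (S g) ∧ k ∈ Z h ∧ bi k := by
    intro g
    by_cases hg : g ∈ G.edgeCut {p} ∩ H
    swap
    · exact ⟨∅, fun h => absurd h hg⟩
    obtain ⟨v, l, q, h1, h2, h3, h4, h5, h6⟩ := hS.1 g hg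
    have nb : ∀ d ∈ S g, d.1 ∉ X → ¬ bi d.2.1 := by
      intro d hd hd1 hb
      exact hd1 (hb _ _ (wk_inc h2 d hd)).1
    rcases first_entry h2 hpX with ⟨e1, e2⟩ | ⟨m1, d, m2, e1, e2, e3, e4⟩
    · refine ⟨{k | k ∈ es (S g)}, fun _ => ⟨(hS.1 g hg).mem, (hS.1 g hg).con, ?_⟩⟩
      intro k hk
      left
      refine ⟨hk, ?_⟩
      obtain ⟨x, y, hd⟩ := mem_es.1 hk
      exact nb _ hd (e1 _ (wk_mem_verts h2 hd).1)
    · have hdS : d ∈ S g := by rw [e1]; simp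
      have hdI := wk_inc h2 d hdS
      have hdes : d.2.1 ∈ es (S g) := mem_es.2 ⟨d.1, d.2.2, hdS⟩
      have hdc : d.2.1 ∈ G.edgeCut X ∩ H := ⟨(mem_cut hdI X).2 (Or.inr ⟨e4, e3⟩), h6 _ hdes⟩
      obtain ⟨z1, z2, z3, z4⟩ := hZ _ hdc
      refine ⟨{k | k ∈ es m1 ∨ k ∈ Z d.2.1}, fun _ => ⟨?_, ⟨u, hu, fun h => hpu h.symm, ?_⟩, ?_⟩⟩
      · rw [h1] at e1
        cases m1 with
        | nil =>
          simp only [List.nil_append, List.cons.injEq] at e1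
          rw [← e1.1] at z1
          right
          rw [← e1.1]; exact z1
        | cons d' m1 =>
          simp only [List.cons_append, List.cons.injEq] at e1
          left; rw [← e1.1]; simp
      · rw [e1] at h2
        obtain ⟨c, w1, w2⟩ := wk_append.1 h2
        have hc : d.1 = c := w2.1
        rw [← hc] at w1
        exact (w1.con (fun k hk => Or.inl hk)).trans ((z4 _ _ hdI).symm.mono (fun k hk => Or.inr hk))
      · rintro k (hk | hk)
        · left
          obtain ⟨x, y, hd⟩ := mem_es.1 hk
          have hd' : (x, k, y) ∈ S g := by rw [e1]; simp [hd]
          refine ⟨mem_es.2 ⟨_, _, hd'⟩, nb _ hd' (e2 _ (List.mem_map.2 ⟨_, hd, rfl⟩))⟩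
        · by_cases hkd : k = d.2.1
          · left; rw [hkd]; exact ⟨hdes, nb d hdS e3⟩
          · right; exact ⟨d.2.1, hdc, hdes, hk, z3 k hk hkd⟩
  choose C' hC' using key
  have hex : ∃ a, ∀ g ∈ (G.edgeCut {p} ∩ H) \ {a}, f ∉ es (S g) := by
    by_cases hex : ∃ a ∈ G.edgeCut {p} ∩ H, f ∈ es (S a)
    · obtain ⟨a, ha, hfa⟩ := hex
      exact ⟨a, fun g hg h => hS.2 g hg.1 a ha hg.2 f h hfa⟩
    · push Not at hex
      exact ⟨f, fun g hg => hex g hg.1⟩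
  obtain ⟨a', ha'⟩ := hex
  refine ⟨a', C', ?_, ?_⟩
  · intro g hg
    obtain ⟨c1, c2, c3⟩ := hC' g hg.1
    refine ⟨c1, ?_, ?_, c2⟩
    · intro k hk
      rcases c3 k hk with ⟨i1, i2⟩ | ⟨h, hh, i1, i2, i3⟩
      · refine ⟨(hS.1 g hg.1).sub k i1, fun hkZ => ?_⟩
        by_cases hkf : k = f
        · exact ha' g hg (hkf ▸ i1)
        · exact i2 ((hZ f hfX).2.2.1 k hkZ hkf)
      · refine ⟨(hZ h hh).2.1 i2, fun hkZ => ?_⟩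
        have hhf : h ≠ f := fun e => ha' g hg (e ▸ i1)
        exact hZd h hh f hfX hhf k i2 hkZ
    · intro k hk hkp
      rcases c3 k hk with ⟨i1, i2⟩ | ⟨h, hh, i1, i2, i3⟩
      · exact psys_cut hS hg.1 i1 hkp
      · exfalso
        obtain ⟨x, y, hI⟩ := exists_ends G k
        have := i3 x y hI
        rcases (mem_cut_single hI).1 hkp with rfl | rfl
        · exact hpX this.1
        · exact hpX this.2
  · intro g hg g' hg' hne k hk hk'
    rcases (hC' g hg.1).2.2 k hk with ⟨i1, i2⟩ | ⟨h, hh, i1, i2, i3⟩ <;>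
    rcases (hC' g' hg'.1).2.2 k hk' with ⟨j1, j2⟩ | ⟨h', hh', j1, j2, j3⟩
    · exact hS.2 g hg.1 g' hg'.1 hne k i1 j1
    · exact i2 j3
    · exact j2 i3
    · have : h ≠ h' := by
        rintro rfl
        exact hS.2 g hg.1 g' hg'.1 hne h i1 j1
      exact hZd h hh h' hh' this k i2 j2

theorem main_aux (h1 : G.InnerEulerian) (h2 : ∀ p ∈ G.T, LK G Set.univ p) {t : V} (ht : t ∈ G.T) {e : E}
    (he : e ∈ G.edgeCut {t}) :
    ∃ d m q, Wk G t (d :: m) q ∧ q ∈ G.T ∧ q ≠ t ∧ (vs (d :: m) ++ [q]).Nodup ∧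
      (∀ x ∈ vs m, x ∉ G.T) ∧ e ∈ es (d :: m) ∧ ∀ p ∈ G.T, LK G {k | k ∈ es (d :: m)}ᶜ p := by
  obtain ⟨C, hC⟩ := h2 t ht
  have heD : e ∈ G.edgeCut {t} ∩ Set.univ := ⟨he, trivial⟩
  obtain ⟨c1, c2, c3, q0, hq0, hq0t, hcon⟩ := hC.1 e heD
  obtain ⟨d, L, q, hw, hq, hqt, hnd, hLC, hin⟩ := tpath_of_con hcon hq0 hq0t
  have hde : d.2.1 = e := c3 _ (hLC _ (by simp)) ((mem_cut_single hw.2.1).2 (Or.inl hw.1))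
  have hLcut : ∀ k ∈ es (d :: L), k ∈ G.edgeCut {t} → k = e := fun k hk hkt => c3 k (hLC k hk) hkt
  have hesn := es_nodup hw hnd
  by_contra hDone
  have ind : ∀ l1 l2, d :: L = l1 ++ l2 → ∀ p ∈ G.T, LK G {k | k ∈ es l1}ᶜ p := by
    intro l1
    induction l1 using List.reverseRecOn with
    | nil =>
      intro l2 _ p hp
      have : ({k : E | k ∈ es ([] : List (V × E × V))}ᶜ : Set E) = Set.univ := by ext; simp
      rw [this]; exact h2 p hp
    | append_singleton l1 b ih =>
      intro l2 hl
      rw [List.append_assoc] at hl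
      have ih' := ih _ hl
      by_contra hcon'
      push Not at hcon'
      obtain ⟨u, hu, hnl⟩ := hcon'
      have hset : ({k | k ∈ es (l1 ++ [b])}ᶜ : Set E) = {k | k ∈ es l1}ᶜ \ {b.2.1} := by
        ext k; simp
      have hsub : ∀ k ∈ es (l1 ++ [b]), k ∈ es (d :: L) := by
        intro k hk
        rw [hl]; simp at hk ⊢; tauto
      have hemem : e ∈ es (l1 ++ [b]) := by
        cases l1 with
        | nil => simp at hl; simp [← hl.1, hde]
        | cons d' l1 => simp at hl; simp [← hl.1, hde]
      have hut : u ≠ t := by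
        rintro rfl
        apply hnl
        refine ⟨C, ?_, fun g hg g' hg' => hC.2 g ⟨hg.1, trivial⟩ g' ⟨hg'.1, trivial⟩⟩
        intro g hg
        obtain ⟨i1, i2, i3, i4⟩ := hC.1 g ⟨hg.1, trivial⟩
        refine ⟨i1, ?_, i3, i4⟩
        intro k hk hk'
        have hge : g ≠ e := by
          rintro rfl; exact hg.2 hemem
        exact hC.2 g ⟨hg.1, trivial⟩ e heD hge k hk (hLC k (hsub k hk'))
      have hw' := hw
      rw [hl] at hw'
      obtain ⟨c, w1, w2⟩ := wk_append.1 hw'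
      have hbc : b.1 = c := w2.1
      have hbI : G.I b.2.1 = s(b.1, b.2.2) := w2.2.1
      rw [← hbc] at w1
      have hbH : b.2.1 ∈ ({k | k ∈ es l1}ᶜ : Set E) := by
        intro hk
        have hk : b.2.1 ∈ es l1 := hk
        have hn := hesn
        rw [hl, es_append] at hn
        exact (List.nodup_append.1 hn).2.2 _ hk b.2.1 (by simp) rfl
      rw [hset] at hnl
      obtain ⟨Zf, z1, z2, z3, z4⟩ := drop_edge ih' hu hbH hnl
      have hFcut : ∀ k ∈ es l1, ∀ p ∈ G.T, k ∈ G.edgeCut {p} → p = t := by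
        intro k hk p hp hkp
        obtain ⟨x, y, hxy⟩ := mem_es.1 hk
        have hm := wk_mem_verts w1 hxy
        have hvL : ∀ v ∈ vs l1 ++ [b.1], v ∈ G.T → v = t := by
          intro v hv hvT
          have : v ∈ vs (d :: L) := by
            rw [hl]; simp at hv ⊢; tauto
          rcases List.mem_cons.1 this with h | h
          · rw [h]; exact hw.1
          · exact absurd hvT (hin v h)
        rcases (mem_cut_single (wk_inc w1 _ hxy)).1 hkp with h | h
        · simp only at h; subst h
          exact hvL _ (List.mem_append_left _ hm.1) hp
        · simp only at h; subst h
          exact hvL _ hm.2.2.2 hp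
      have hconn : Con G ({k | k ∈ es l1} ∪ Zf) t u :=
        (w1.con (fun k hk => Or.inl hk)).trans ((z3 _ _ hbI).symm.mono Set.subset_union_right)
      obtain ⟨d', m, q', hw2, hq', hqt', hnd', hC', hin'⟩ := tpath_of_con hconn hu hut
      have hd'cut : d'.2.1 ∈ G.edgeCut {t} := (mem_cut_single hw2.2.1).2 (Or.inl hw2.1)
      have hbL : ∀ k, k ∈ es l1 ∨ k = b.2.1 → k ∈ es (d :: L) := by
        intro k hk
        apply hsub; simpa using hk
      have hd'e : d'.2.1 = e := by
        rcases hC' d'.2.1 (by simp) with h | h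
        · exact hLcut _ (hbL _ (Or.inl h)) hd'cut
        · by_cases hb : d'.2.1 = b.2.1
          · exact hLcut _ (hbL _ (Or.inr hb)) hd'cut
          · exact absurd (z2 _ h hb t ht hd'cut).symm hut
      have heP : e ∈ es (d' :: m) := by simp [hd'e]
      apply hDone
      refine ⟨d', m, q', hw2, hq', hqt', hnd', hin', heP, ?_⟩
      have hEul := eulIn_remove h1 hw2 (es_nodup hw2 hnd') ht hq'
      intro p hp
      obtain ⟨a, C', hsys⟩ := z4 p hp
      refine lemmaA (a := a) (C := C') hEul hp (hsys.restr ?_ ?_)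
      · rintro k ⟨⟨k1, k2⟩, k3⟩
        refine ⟨⟨k1, fun hk => k2 ?_⟩, k3⟩
        have hpt := hFcut k hk p hp k1
        subst hpt
        rw [hLcut k (hbL k (Or.inl hk)) k1]
        exact heP
      · rintro k ⟨k1, k2⟩ hk
        rcases hC' k hk with h | h
        · exact k1 h
        · exact k2 h
  exact hDone ⟨d, L, q, hw, hq, hqt, hnd, hin, by simp [hde], ind _ [] (by simp)⟩

end Aux

end Grapht

/-- In a countable inner Eulerian grapht satisfying the linkability condition, every
edge incident with a terminal lies on a `T`-path whose removal preserves both being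
inner Eulerian and the linkability condition. -/
theorem remove_one_tpath {V : Type u} {E : Type v} [Countable E] (G : Grapht V E)
    (h1 : G.InnerEulerian) (h2 : G.LinkabilityCondition)
    (e : E) (he : ∃ t ∈ G.T, e ∈ G.edgeCut {t}) :
    ∃ P : G.Path, G.IsTPath P ∧ e ∈ P.edges ∧
      (G.restrict P.edgeSetᶜ).InnerEulerian ∧
      (G.restrict P.edgeSetᶜ).LinkabilityCondition := by
  obtain ⟨t, ht, het⟩ := he
  obtain ⟨d, m, q, hw, hq, hqt, hnd, hin, hem, hlk⟩ := Grapht.main_aux h1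
    (fun p hp => Grapht.lk_of_linked hp (h2 p hp)) ht het
  obtain ⟨P, p1, p2, p3, p4⟩ := Grapht.exists_Path hw hnd
  have hE : P.edgeSet = {k | k ∈ Grapht.es (d :: m)} := by
    ext k; simp [Grapht.Path.edgeSet, p3]
  refine ⟨P, ⟨p1 ▸ ht, p2 ▸ hq, ?_, ?_⟩, ?_, ?_, ?_⟩
  · rw [p1, p2]; exact hqt.symm
  · rw [p4]; exact hin
  · rw [p3]; exact hem
  · rw [hE]
    exact Grapht.eulIn_restrict (Grapht.eulIn_remove h1 hw (Grapht.es_nodup hw hnd) ht hq)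
  · rw [hE]
    intro p hp
    exact Grapht.linked_restrict hp (hlk p hp)
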